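/- Let d ≥ 1, D ≥ 1, and let (A_n)_{n≥1} be rotor-router aggregation in ℤ^d built from any configuration of rotor stacks with discrepancy at most D. Then there is a constant C = C(d), independent of n and D, such that for all n ≥ 1, 𝓛(n^{−1/d} A_n^□ Δ B) ≤ C (n^{−1/2−1/d} Φ(n)^{1/2} + D^{1−1/(8d)} n^{−1/(2d)}), where B ⊆ ℝ^d is the closed Euclidean ball of unit volume centered at the origin. -/

import Mathlib

open scoped BigOperators Pointwise symmDiff
open MeasureTheory Filter

noncomputable section
open scoped Classical
namespace RotorRouterPaper

/-- Sites of the lattice `ℤ^d`. -/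
abbrev Site (d : ℕ) := Fin d → ℤ

/-- The `i`-th standard basis vector of `ℤ^d`. -/
def unitVec (d : ℕ) (i : Fin d) : Site d := fun j => if j = i then 1 else 0

/-- Squared Euclidean norm of a lattice point. -/
def nsq {d : ℕ} (x : Site d) : ℝ := ∑ i, ((x i : ℝ)) ^ 2

/-- Euclidean norm of a lattice point. -/
def enorm {d : ℕ} (x : Site d) : ℝ := Real.sqrt (nsq x)

/-- Adjacency `x ∼ y`: Euclidean distance one. -/
def Adj {d : ℕ} (x y : Site d) : Prop := nsq (x - y) = 1

/-- `ω_d`, the Lebesgue volume of the unit ball in `ℝ^d`. -/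
def ballVol (d : ℕ) : ℝ := (volume (Metric.ball (0 : EuclideanSpace ℝ (Fin d)) 1)).toReal

/-- The lattice ball `B_n = {y ∈ ℤ^d : ω_d ‖y‖^d < n}`. -/
def lball (d n : ℕ) : Set (Site d) := {y | ballVol d * enorm y ^ d < (n : ℝ)}

/-- Characterization of the expected exit time function of a (finite) region `A ⊆ ℤ^d`:
it vanishes off `A` and its discrete Laplacian is `-1` on `A`. -/
def IsExitFun (d : ℕ) (A : Set (Site d)) (e : Site d → ℝ) : Prop :=
  (∀ x, x ∉ A → e x = 0) ∧
  ∀ x ∈ A, (1 / (2 * (d : ℝ))) * (∑ i, (e (x + unitVec d i) + e (x - unitVec d i))) - e x = -1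

/-- The expected exit time function `x ↦ e_x(A)` (the unique function satisfying
`IsExitFun` when `A` is finite). -/
def exitFun (d : ℕ) (A : Set (Site d)) : Site d → ℝ :=
  if h : ∃ e, IsExitFun d A e then h.choose else 0

/-- `ē(A) = sup_x e_x(A)`. -/
def ebar (d : ℕ) (A : Set (Site d)) : ℝ := sSup (Set.range (exitFun d A))

/-- `φ(n) = sup {ē(A) - e_o(B_n) : A ⊆ ℤ^d, |A| = n}`. -/
def phi (d n : ℕ) : ℝ :=
  sSup {t | ∃ A : Set (Site d), A.Finite ∧ A.ncard = n ∧ t = ebar d A - exitFun d (lball d n) 0}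

/-- `Φ(n) = ∑_{j=1}^n φ(j)`. -/
def PhiSum (d n : ℕ) : ℝ := ∑ j ∈ Finset.Icc 1 n, phi d j

/-- `ψ(A) = ∑_{x ∈ A} ‖x‖²`. -/
def psi {d : ℕ} (A : Set (Site d)) : ℝ := ∑ᶠ x ∈ A, nsq x

/-- A cardinal direction in `ℤ^d`: one of `±e_1, …, ±e_d`. -/
abbrev Dir (d : ℕ) := Fin d × Bool

/-- The lattice step vector of a cardinal direction. -/
def dirVec (d : ℕ) (ε : Dir d) : Site d := if ε.2 then unitVec d ε.1 else -unitVec d ε.1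

/-- A configuration of rotor stacks `r` (with `r x i` the direction used for the
`(i+1)`-st visit to `x`) has discrepancy at most `D` if for every site, direction and `m ≥ 1`,
among the first `m` rotors of the stack each direction occurs `m/(2d)` times up to error `D`. -/
def HasDiscrepancy (d : ℕ) (D : ℝ) (r : Site d → ℕ → Dir d) : Prop :=
  ∀ (x : Site d) (ε : Dir d) (m : ℕ), 1 ≤ m →
    |(({i | i < m ∧ r x i = ε} : Set ℕ).ncard : ℝ) - (m : ℝ) / (2 * (d : ℝ))| ≤ D

/-- One step of rotor-router walk on a state (current position, visit counts so far):
the particle at `p` being visited for the `(c p + 1)`-st time moves in direction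
`r p (c p)` and the visit count at `p` increases by one. -/
def rstep {d : ℕ} (r : Site d → ℕ → Dir d) (s : Site d × (Site d → ℕ)) :
    Site d × (Site d → ℕ) :=
  (s.1 + dirVec d (r s.1 (s.2 s.1)), Function.update s.2 s.1 (s.2 s.1 + 1))

/-- The state after `t` steps of rotor-router walk started at the origin with visit counts `c`. -/
def walkState {d : ℕ} (r : Site d → ℕ → Dir d) (c : Site d → ℕ) (t : ℕ) :
    Site d × (Site d → ℕ) :=
  (rstep r)^[t] (0, c)

/-- The number of steps until the rotor-router walk started at the origin
(with carried-over visit counts `c`) first leaves the region `A`. -/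
def exitSteps {d : ℕ} (r : Site d → ℕ → Dir d) (A : Set (Site d)) (c : Site d → ℕ) : ℕ :=
  sInf {t | (walkState r c t).1 ∉ A}

/-- The state of rotor-router aggregation after `n` particles have walked and settled:
`(aggState r n).1` is the occupied region `A_{n+1}`, `(aggState r n).2.1` the accumulated
visit counts, and `(aggState r n).2.2` the total number `T_n` of steps taken so far. -/
def aggState {d : ℕ} (r : Site d → ℕ → Dir d) : ℕ → Set (Site d) × (Site d → ℕ) × ℕ
  | 0 => ({0}, fun _ => 0, 0)
  | n + 1 =>
      let s := aggState r n
      let τ := exitSteps r s.1 s.2.1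
      (insert (walkState r s.2.1 τ).1 s.1, (walkState r s.2.1 τ).2, s.2.2 + τ)

/-- The region `A_n` of rotor-router aggregation (for `n ≥ 1`). -/
def aggRegion {d : ℕ} (r : Site d → ℕ → Dir d) (n : ℕ) : Set (Site d) :=
  (aggState r (n - 1)).1

/-- `T_n`, the total number of steps taken by the first `n` particles. -/
def totalSteps {d : ℕ} (r : Site d → ℕ → Dir d) (n : ℕ) : ℕ := (aggState r n).2.2

/-- `A^□ = A + [-1/2,1/2]^d ⊆ ℝ^d`. -/
def box (d : ℕ) (A : Set (Site d)) : Set (EuclideanSpace ℝ (Fin d)) :=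
  {z | ∃ x ∈ A, ∀ i, |z i - (x i : ℝ)| ≤ 1 / 2}

/-- The closed Euclidean ball of unit volume centered at the origin of `ℝ^d`. -/
def unitVolBall (d : ℕ) : Set (EuclideanSpace ℝ (Fin d)) :=
  Metric.closedBall 0 (ballVol d ^ (-(1 : ℝ) / (d : ℝ)))

/-- `A ⊆ ℤ^d` is orthoconvex if every line parallel to a coordinate axis meets `A`
in an interval. -/
def Orthoconvex (d : ℕ) (A : Set (Site d)) : Prop :=
  ∀ x ∈ A, ∀ i : Fin d, ∀ k : ℤ, 0 < k → x + k • unitVec d i ∈ A →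
    ∀ j : ℤ, 0 < j → j < k → x + j • unitVec d i ∈ A

/-- The nonnegative orthant `Q ⊆ ℤ^d`. -/
def orthant (d : ℕ) : Set (Site d) := {x | ∀ i, 0 ≤ x i}

/-- The cube `C(o,r) = {x : ‖x‖_∞ ≤ r}`. -/
def cubeSet (d : ℕ) (r : ℕ) : Set (Site d) := {x | ∀ i, |x i| ≤ (r : ℤ)}

/-- The boundary `∂C(o,r) = {x : ‖x‖_∞ = r + 1 and x ∼ y for some y ∈ C(o,r)}`. -/
def cubeBdry (d : ℕ) (r : ℕ) : Set (Site d) :=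
  {x | (∀ i, |x i| ≤ (r : ℤ) + 1) ∧ (∃ i, |x i| = (r : ℤ) + 1) ∧ ∃ y ∈ cubeSet d r, Adj x y}

/-- Characterization of `h_r(x) = P_x(T_Q > T_{∂C(o,r)})`: it vanishes on
`Q ∩ (C(o,r) ∪ ∂C(o,r))`, equals `1` on `∂C(o,r) ∖ Q`, is discrete harmonic on
`C(o,r) ∖ Q`, and (as a normalization) vanishes off `C(o,r) ∪ ∂C(o,r)`. -/
def IsOrthHarm (d : ℕ) (r : ℕ) (h : Site d → ℝ) : Prop :=
  (∀ x, x ∉ cubeSet d r ∪ cubeBdry d r → h x = 0) ∧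
  (∀ x ∈ orthant d ∩ (cubeSet d r ∪ cubeBdry d r), h x = 0) ∧
  (∀ x ∈ cubeBdry d r \ orthant d, h x = 1) ∧
  (∀ x ∈ cubeSet d r \ orthant d,
    h x = (1 / (2 * (d : ℝ))) * ∑ i, (h (x + unitVec d i) + h (x - unitVec d i)))

/-- The function `h_r` of the previous characterization. -/
def orthHarm (d : ℕ) (r : ℕ) : Site d → ℝ :=
  if h : ∃ f, IsOrthHarm d r f then h.choose else 0

/-- `p(k,r) = sup {h_r(x) : ‖x‖_∞ ≤ k}`. -/
def pkr (d k r : ℕ) : ℝ :=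
  sSup {t | ∃ x : Site d, (∀ i, |x i| ≤ (k : ℤ)) ∧ t = orthHarm d r x}

/-- The exponent `γ_d` of Theorem 3.1. -/
def gam (d : ℕ) : ℝ :=
  if d = 1 then 1 else if d = 2 then 1 / 3
  else (2 : ℝ) ^ (-(d : ℝ)) / (2 * (d : ℝ) ^ 2 * Real.log 3)

/-!
Testing the rotor-router walks against a function `f` gives a conservation law: up to the rotor
discrepancy, the sum of `f` over the occupied sites `A` minus `n f(o)` is the sum over all visits of
the discrete Laplacian of `f`. For `f = ‖·‖²`, whose Laplacian is `1`, the second moment of `A` is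
nearly the total number of visits. For the exit time `f = e(A)`, whose Laplacian is `-1` on `A`, the
number of visits is nearly the sum of `e_o(A) - e_x(A)` over `x ∈ A`. Here the discrepancy costs
`D` times the `ℓ¹` norm of the gradient of `e(A)`, which an isoperimetric inequality bounds by a
multiple of `n ^ (1 + 1 / d)`.

Listing `A` by increasing exit time, the superlevel set of size `j` contributes at most
`φ(j) + e_o(B_j)`, because `e(A)` minus its lowest value there is dominated by the exit time of that
set. The sum of `e_o(B_j)` over `j ≤ n` is, to leading order, the second moment of the ball of
volume `n`. So the second moment of `A` exceeds the minimum possible for its volume by little more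
than `Φ(n)`, and the square of the symmetric difference with the ball is controlled by this excess.
-/

/-! ## Discrete Laplacian and exit times -/

section Laplacian

variable {d : ℕ}

/-- The generator of simple random walk on `ℤ^d`: the mean over the `2d` neighbours minus the
value at the centre. -/
def laplacian (d : ℕ) : (Site d → ℝ) →ₗ[ℝ] (Site d → ℝ) where
  toFun u x := (1 / (2 * (d : ℝ))) * (∑ i, (u (x + unitVec d i) + u (x - unitVec d i))) - u x
  map_add' u v := by
    ext x
    simp only [Pi.add_apply, Finset.sum_add_distrib]
    ring
  map_smul' c u := by
    ext x
    simp only [Pi.smul_apply, smul_eq_mul, ← mul_add, ← Finset.mul_sum, RingHom.id_apply]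
    ring

lemma laplacian_apply (u : Site d → ℝ) (x : Site d) :
    laplacian d u x =
      (1 / (2 * (d : ℝ))) * (∑ i, (u (x + unitVec d i) + u (x - unitVec d i))) - u x :=
  rfl

lemma laplacian_const (hd : 1 ≤ d) (a : ℝ) (x : Site d) : laplacian d (fun _ => a) x = 0 := by
  have : (d : ℝ) ≠ 0 := by positivity
  simp only [laplacian_apply, Finset.sum_const, Finset.card_univ, Fintype.card_fin, nsmul_eq_mul]
  field_simp
  ring

lemma laplacian_sub_const (hd : 1 ≤ d) (u : Site d → ℝ) (a : ℝ) (x : Site d) :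
    laplacian d (fun y => u y - a) x = laplacian d u x :=
  calc laplacian d (fun y => u y - a) x = laplacian d u x - laplacian d (fun _ => a) x :=
        congrFun (map_sub (laplacian d) u fun _ => a) x
    _ = laplacian d u x := by rw [laplacian_const hd, sub_zero]

lemma sum_dirVec {M : Type*} [AddCommMonoid M] (g : Site d → M) :
    ∑ ε, g (dirVec d ε) = ∑ i, (g (unitVec d i) + g (-unitVec d i)) := by
  simp only [Fintype.sum_prod_type, Fintype.sum_bool, dirVec, if_true, Bool.false_eq_true, if_false]

lemma sum_dirVec_sub (u : Site d → ℝ) (x : Site d) :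
    ∑ ε, (u (x + dirVec d ε) - u x) = 2 * d * laplacian d u x := by
  rcases Nat.eq_zero_or_pos d with rfl | hd
  · simp
  have : (d : ℝ) ≠ 0 := by positivity
  simp only [sum_dirVec (fun e => u (x + e) - u x), laplacian_apply, ← sub_eq_add_neg,
    Finset.sum_add_distrib, Finset.sum_sub_distrib, Finset.sum_const, Finset.card_univ,
    Fintype.card_fin, nsmul_eq_mul]
  field_simp
  ring

/-- Among the minimum points of `u` on `A` choose one with the largest first coordinate: a negative
minimum would propagate to its neighbour in that direction. -/
lemma nonneg_of_laplacian_nonpos (hd : 1 ≤ d) {A : Finset (Site d)} {u : Site d → ℝ}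
    (hlap : ∀ x ∈ A, laplacian d u x ≤ 0)
    (hbd : ∀ x ∈ A, ∀ ε, x + dirVec d ε ∉ A → 0 ≤ u (x + dirVec d ε)) :
    ∀ x ∈ A, 0 ≤ u x := by
  by_contra! ⟨x₀, hx₀, hneg⟩
  obtain ⟨x₁, hx₁, hmin⟩ := A.exists_min_image u ⟨x₀, hx₀⟩
  obtain ⟨x, hx, hmax⟩ := (A.filter (u · = u x₁)).exists_max_image (· ⟨0, hd⟩)
    ⟨x₁, by simp [hx₁]⟩
  obtain ⟨hxA, hux⟩ := Finset.mem_filter.mp hx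
  have hlt : u x < 0 := hux ▸ (hmin x₀ hx₀).trans_lt hneg
  have hstep : ∀ ε, 0 ≤ u (x + dirVec d ε) - u x := fun ε => by
    by_cases h : x + dirVec d ε ∈ A
    · linarith [hmin _ h]
    · linarith [hbd x hxA ε h]
  have hsum : ∑ ε, (u (x + dirVec d ε) - u x) = 0 :=
    le_antisymm
      (by rw [sum_dirVec_sub]; exact mul_nonpos_of_nonneg_of_nonpos (by positivity) (hlap x hxA))
      (Finset.sum_nonneg fun ε _ => hstep ε)
  have heq : u (x + dirVec d (⟨0, hd⟩, true)) - u x = 0 :=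
    (Finset.sum_eq_zero_iff_of_nonneg fun ε _ => hstep ε).mp hsum _ (Finset.mem_univ _)
  have hmem : x + dirVec d (⟨0, hd⟩, true) ∈ A := by
    by_contra h
    linarith [hbd x hxA _ h]
  have := hmax _ (Finset.mem_filter.mpr ⟨hmem, by linarith⟩)
  simp [dirVec, unitVec] at this

lemma eq_zero_of_laplacian_eq_zero (hd : 1 ≤ d) {A : Finset (Site d)} {u : Site d → ℝ}
    (hlap : ∀ x ∈ A, laplacian d u x = 0) (hoff : ∀ x ∉ A, u x = 0) : u = 0 := by
  ext x
  by_cases hx : x ∈ A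
  · refine le_antisymm (neg_nonneg.mp ?_) (nonneg_of_laplacian_nonpos hd
      (fun y hy => (hlap y hy).le) (fun y _ ε h => (hoff _ h).ge) x hx)
    refine nonneg_of_laplacian_nonpos (u := -u) hd (fun y hy => ?_) (fun y _ ε h => ?_) x hx
    · simp [hlap y hy]
    · simp [hoff _ h]
  · exact hoff x hx

/-- The Laplacian with zero boundary values is injective, hence surjective, on functions on `A`. -/
lemma exists_isExitFun (hd : 1 ≤ d) (A : Finset (Site d)) : ∃ e, IsExitFun d A e := by
  let extend := Function.ExtendByZero.linearMap ℝ (Subtype.val : A → Site d)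
  let dirichlet := LinearMap.funLeft ℝ ℝ (Subtype.val : A → Site d) ∘ₗ laplacian d ∘ₗ extend
  have extend_val (g : A → ℝ) (x : A) : extend g x = g x :=
    Subtype.val_injective.extend_apply g (0 : Site d → ℝ) x
  have extend_off (g : A → ℝ) : ∀ x ∉ A, extend g x = 0 := fun x hx =>
    Function.extend_apply' g (0 : Site d → ℝ) x fun ⟨y, hy⟩ => hx (hy ▸ y.2)
  have hinj : Function.Injective dirichlet := by
    refine (injective_iff_map_eq_zero dirichlet).mpr fun g hg => funext fun x => ?_
    have := eq_zero_of_laplacian_eq_zero hd (u := extend g) (fun y hy => congrFun hg ⟨y, hy⟩)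
      (extend_off g)
    rw [← extend_val g x, this]
    rfl
  obtain ⟨g, hg⟩ := LinearMap.injective_iff_surjective.mp hinj (fun _ => -1 : A → ℝ)
  exact ⟨extend g, extend_off g, fun x hx => congrFun hg ⟨x, hx⟩⟩

lemma isExitFun_exitFun (hd : 1 ≤ d) (A : Finset (Site d)) : IsExitFun d A (exitFun d A) := by
  rw [exitFun, dif_pos (exists_isExitFun hd A)]
  exact (exists_isExitFun hd A).choose_spec

lemma exitFun_of_notMem (hd : 1 ≤ d) {A : Finset (Site d)} {x : Site d} (hx : x ∉ A) :
    exitFun d A x = 0 :=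
  (isExitFun_exitFun hd A).1 x hx

lemma laplacian_exitFun (hd : 1 ≤ d) {A : Finset (Site d)} {x : Site d} (hx : x ∈ A) :
    laplacian d (exitFun d A) x = -1 :=
  (isExitFun_exitFun hd A).2 x hx

lemma support_exitFun_subset (hd : 1 ≤ d) (A : Finset (Site d)) :
    (exitFun d A).support ⊆ A :=
  Function.support_subset_iff'.mpr fun _ hx => exitFun_of_notMem hd hx

lemma le_exitFun (hd : 1 ≤ d) {A : Finset (Site d)} {w : Site d → ℝ}
    (hlap : ∀ x ∈ A, -1 ≤ laplacian d w x) (hoff : ∀ x ∉ A, w x ≤ 0) (x : Site d) :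
    w x ≤ exitFun d A x := by
  by_cases hx : x ∈ A
  · refine sub_nonneg.mp (nonneg_of_laplacian_nonpos (u := exitFun d A - w) hd
      (fun y hy => ?_) (fun y _ ε h => ?_) x hx)
    · rw [map_sub, Pi.sub_apply, laplacian_exitFun hd hy]
      linarith [hlap y hy]
    · rw [Pi.sub_apply, exitFun_of_notMem hd h]
      linarith [hoff _ h]
  · exact (hoff x hx).trans (exitFun_of_notMem hd hx).ge

lemma exitFun_le (hd : 1 ≤ d) {A : Finset (Site d)} {w : Site d → ℝ}
    (hlap : ∀ x ∈ A, laplacian d w x ≤ -1)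
    (hbd : ∀ x ∈ A, ∀ ε, x + dirVec d ε ∉ A → 0 ≤ w (x + dirVec d ε)) :
    ∀ x ∈ A, exitFun d A x ≤ w x := fun x hx => by
  refine sub_nonneg.mp (nonneg_of_laplacian_nonpos (u := w - exitFun d A) hd
    (fun y hy => ?_) (fun y hy ε h => ?_) x hx)
  · rw [map_sub, Pi.sub_apply, laplacian_exitFun hd hy]
    linarith [hlap y hy]
  · rw [Pi.sub_apply, exitFun_of_notMem hd h, sub_zero]
    exact hbd y hy ε h

lemma exitFun_nonneg (hd : 1 ≤ d) (A : Finset (Site d)) (x : Site d) : 0 ≤ exitFun d A x :=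
  le_exitFun hd (w := fun _ => 0) (fun y _ => by rw [laplacian_const hd]; norm_num)
    (fun _ _ => le_rfl) x

lemma exitFun_le_ebar (hd : 1 ≤ d) (A : Finset (Site d)) (x : Site d) :
    exitFun d A x ≤ ebar d A :=
  le_csSup (((A.finite_toSet.image _).insert 0).subset
    ((Function.range_subset_insert_image_support _).trans (Set.insert_subset_insert
      (Set.image_mono (support_exitFun_subset hd A))))).bddAbove ⟨x, rfl⟩

lemma ebar_le {A : Set (Site d)} {b : ℝ} (h : ∀ x, exitFun d A x ≤ b) : ebar d A ≤ b :=
  csSup_le (Set.range_nonempty _) (Set.forall_mem_range.mpr h)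

/-- Peel off the points of `S` in increasing order of `u`: if `x` is the lowest point, then
`u - u x` is bounded by the exit time from `S`. -/
lemma sum_sub_le_sum_of_superlevel (hd : 1 ≤ d) {u : Site d → ℝ} {K : ℕ → ℝ}
    (hK : ∀ S : Finset (Site d), exitFun d S 0 ≤ K S.card) (S : Finset (Site d))
    (hlap : ∀ x ∈ S, -1 ≤ laplacian d u x) (hlevel : ∀ x ∈ S, ∀ y ∉ S, u y ≤ u x) :
    ∑ x ∈ S, (u 0 - u x) ≤ ∑ j ∈ Finset.Icc 1 S.card, K j := by
  induction S using Finset.induction_on_min_value u with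
  | empty => simp
  | insert x S hxS hmin ih =>
    have hlow : ∀ y ∉ insert x S, u y - u x ≤ 0 := fun y hy =>
      sub_nonpos.mpr (hlevel x (S.mem_insert_self x) y hy)
    have hexit : u 0 - u x ≤ K (S.card + 1) := by
      rw [← Finset.card_insert_of_notMem hxS]
      refine (le_exitFun hd (w := fun y => u y - u x) (fun y hy => ?_) hlow 0).trans (hK _)
      rw [laplacian_sub_const hd]
      exact hlap y hy
    have hrest := ih (fun y hy => hlap y (Finset.mem_insert_of_mem hy)) fun y hy z hz => by
      by_cases hzx : z = x
      · exact hzx ▸ hmin y hy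
      · exact hlevel y (Finset.mem_insert_of_mem hy) z (by simp [hzx, hz])
    rw [Finset.sum_insert hxS, Finset.card_insert_of_notMem hxS,
      Finset.sum_Icc_succ_top (Nat.le_add_left 1 _)]
    linarith

end Laplacian

/-! ## Variation under translation -/

section Variation

variable {G : Type*} [AddCommGroup G] {u : G → ℝ}

/-- The `ℓ¹` distance between `u` and its translate by `z`; meaningful for finitely supported `u`,
since otherwise the series may diverge. -/
def variation (u : G → ℝ) (z : G) : ℝ := ∑' x, |u (x + z) - u x|

lemma variation_nonneg (u : G → ℝ) (z : G) : 0 ≤ variation u z :=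
  tsum_nonneg fun _ => abs_nonneg _

lemma variation_zero (u : G → ℝ) : variation u 0 = 0 := by simp [variation]

lemma variation_neg (u : G → ℝ) (z : G) : variation u (-z) = variation u z :=
  calc variation u (-z) = ∑' x, |u (x + z + -z) - u (x + z)| :=
        ((Equiv.addRight z).tsum_eq fun x => |u (x + -z) - u x|).symm
    _ = variation u z := by simp only [add_neg_cancel_right, abs_sub_comm, variation]

lemma summable_abs_sub (hu : u.support.Finite) (z : G) : Summable fun x => |u (x + z) - u x| := by
  have hz : (fun x => u (x + z)).support.Finite := hu.preimage (add_left_injective z).injOn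
  refine summable_of_hasFiniteSupport ((hz.union hu).subset fun x hx => ?_)
  by_contra! h
  simp_all

lemma sum_abs_sub_le_variation (hu : u.support.Finite) (A : Finset G) (z : G) :
    ∑ x ∈ A, |u (x + z) - u x| ≤ variation u z :=
  (summable_abs_sub hu z).sum_le_tsum A fun _ _ => abs_nonneg _

lemma variation_add_le (hu : u.support.Finite) (z w : G) :
    variation u (z + w) ≤ variation u z + variation u w := by
  have hz : Summable fun x => |u (x + w + z) - u (x + w)| :=
    (summable_abs_sub hu z).comp_injective (add_left_injective w)
  calc variation u (z + w)
      ≤ ∑' x, (|u (x + w + z) - u (x + w)| + |u (x + w) - u x|) := by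
        refine (summable_abs_sub hu _).tsum_le_tsum (fun x => ?_) (hz.add (summable_abs_sub hu w))
        rw [← add_assoc, add_right_comm]
        exact abs_sub_le _ _ _
    _ = (∑' x, |u (x + w + z) - u (x + w)|) + variation u w := hz.tsum_add (summable_abs_sub hu w)
    _ = variation u z + variation u w :=
        congrArg (· + _) ((Equiv.addRight w).tsum_eq fun x => |u (x + z) - u x|)

lemma variation_sum_le (hu : u.support.Finite) {ι : Type*} (s : Finset ι) (z : ι → G) :
    variation u (∑ i ∈ s, z i) ≤ ∑ i ∈ s, variation u (z i) :=
  Finset.le_sum_of_subadditive _ (variation_zero u).le (variation_add_le hu) s z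

lemma variation_nsmul_le (hu : u.support.Finite) (k : ℕ) (z : G) :
    variation u (k • z) ≤ k * variation u z := by
  simpa using variation_sum_le hu (Finset.range k) fun _ => z

lemma variation_sq_le {A : Finset G} (hA : u.support ⊆ A) (z : G) :
    variation u z ^ 2 ≤ 2 * A.card * ∑' x, (u (x + z) - u x) ^ 2 := by
  have hu := Function.support_subset_iff'.mp hA
  let S := A ∪ A.image (· - z)
  have hS : ∀ x ∉ S, u (x + z) - u x = 0 := fun x hx => by
    simp only [S, Finset.mem_union, Finset.mem_image, not_or, not_exists, not_and] at hx
    rw [hu x hx.1, hu (x + z) fun h => hx.2 _ h (add_sub_cancel_right x z), sub_zero]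
  have hcard : (S.card : ℝ) ≤ 2 * A.card := by
    rw [two_mul]
    exact_mod_cast (Finset.card_union_le _ _).trans (Nat.add_le_add_left Finset.card_image_le _)
  calc variation u z ^ 2 = (∑ x ∈ S, |u (x + z) - u x|) ^ 2 := by
        rw [variation, tsum_eq_sum fun x hx => by rw [hS x hx, abs_zero]]
    _ ≤ S.card * ∑ x ∈ S, |u (x + z) - u x| ^ 2 := sq_sum_le_card_mul_sum_sq
    _ ≤ 2 * A.card * ∑ x ∈ S, |u (x + z) - u x| ^ 2 := by gcongr
    _ = 2 * A.card * ∑' x, (u (x + z) - u x) ^ 2 := by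
        simp only [sq_abs]
        rw [tsum_eq_sum fun x hx => by rw [hS x hx, sq, mul_zero]]

/-- At least half of the translates by `T` move a given point of `A` out of `A`. -/
lemma card_mul_sum_abs_le {A T : Finset G} (hA : u.support ⊆ A) (hT : 2 * A.card ≤ T.card) :
    T.card * ∑ x ∈ A, |u x| ≤ 2 * ∑ z ∈ T, variation u z := by
  have hu := Function.support_subset_iff'.mp hA
  have hpoint (x : G) : T.card * |u x| ≤ 2 * ∑ z ∈ T, |u (x + z) - u x| := by
    have hin : (T.filter (x + · ∈ A)).card ≤ A.card :=
      Finset.card_le_card_of_injOn (x + ·) (fun z hz => (Finset.mem_filter.mp hz).2)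
        (add_right_injective x).injOn
    have hout : T.card ≤ 2 * (T.filter (x + · ∉ A)).card := by
      have := T.card_filter_add_card_filter_not (x + · ∈ A)
      omega
    calc T.card * |u x| ≤ (2 * (T.filter (x + · ∉ A)).card : ℝ) * |u x| := by
          gcongr; exact_mod_cast hout
      _ = 2 * ∑ z ∈ T.filter (x + · ∉ A), |u (x + z) - u x| := by
          rw [mul_assoc, ← nsmul_eq_mul, ← Finset.sum_const]
          congr 1
          refine Finset.sum_congr rfl fun z hz => ?_
          rw [hu _ (Finset.mem_filter.mp hz).2, zero_sub, abs_neg]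
      _ ≤ 2 * ∑ z ∈ T, |u (x + z) - u x| := by
          gcongr; exact Finset.filter_subset _ _
  calc T.card * ∑ x ∈ A, |u x| ≤ 2 * ∑ x ∈ A, ∑ z ∈ T, |u (x + z) - u x| := by
        rw [Finset.mul_sum, Finset.mul_sum]
        exact Finset.sum_le_sum fun x _ => hpoint x
    _ = 2 * ∑ z ∈ T, ∑ x ∈ A, |u (x + z) - u x| := by rw [Finset.sum_comm]
    _ ≤ 2 * ∑ z ∈ T, variation u z := by
        gcongr with z
        exact sum_abs_sub_le_variation (A.finite_toSet.subset hA) A z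

lemma tsum_sub_sq {A : Finset G} (hA : u.support ⊆ A) (z : G) :
    ∑' x, (u (x + z) - u x) ^ 2 = ∑ x ∈ A, u x * ((u x - u (x + z)) + (u x - u (x - z))) := by
  have hsum (g : G → ℝ) : Summable fun x => u x * g x :=
    summable_of_hasFiniteSupport ((A.finite_toSet.subset hA).subset
      (Function.support_mul_subset_left u g))
  have hshift : Summable fun x => u (x + z) * (u (x + z) - u x) := by
    simpa [Function.comp_def] using (hsum fun x => u x - u (x - z)).comp_injective
      (add_left_injective z)
  calc ∑' x, (u (x + z) - u x) ^ 2
      = ∑' x, (u (x + z) * (u (x + z) - u x) + u x * (u x - u (x + z))) :=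
        tsum_congr fun x => by ring
    _ = ∑' x, u (x + z) * (u (x + z) - u x) + ∑' x, u x * (u x - u (x + z)) :=
        hshift.tsum_add (hsum _)
    _ = ∑' x, u x * (u x - u (x - z)) + ∑' x, u x * (u x - u (x + z)) := by
        rw [← (Equiv.addRight z).tsum_eq fun x => u x * (u x - u (x - z))]
        simp
    _ = ∑' x, u x * ((u x - u (x + z)) + (u x - u (x - z))) := by
        rw [← (hsum _).tsum_add (hsum _)]
        exact tsum_congr fun x => by ring
    _ = ∑ x ∈ A, u x * ((u x - u (x + z)) + (u x - u (x - z))) :=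
        tsum_eq_sum fun x hx => by rw [Function.support_subset_iff'.mp hA x hx, zero_mul]

end Variation

/-! ## An `ℓ¹` isoperimetric inequality on the lattice -/

section Gradient

variable {d : ℕ} {A : Finset (Site d)} {u : Site d → ℝ}

/-- The `ℓ¹` norm of the discrete gradient. -/
def gradNorm (u : Site d → ℝ) : ℝ := ∑ i, variation u (unitVec d i)

lemma gradNorm_nonneg (u : Site d → ℝ) : 0 ≤ gradNorm u :=
  Finset.sum_nonneg fun _ _ => variation_nonneg _ _

lemma sum_smul_unitVec (z : Site d) : ∑ i, z i • unitVec d i = z := by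
  ext j
  simp [Finset.sum_apply, unitVec]

lemma variation_le_mul_gradNorm (hu : u.support.Finite) {r : ℕ} {z : Site d}
    (hz : ∀ i, z i ∈ Finset.Ico (0 : ℤ) r) : variation u z ≤ r * gradNorm u := by
  simp only [Finset.mem_Ico] at hz
  calc variation u z = variation u (∑ i, (z i).toNat • unitVec d i) := by
        conv_lhs => rw [← sum_smul_unitVec z]
        simp_rw [← natCast_zsmul, Int.toNat_of_nonneg (hz _).1]
    _ ≤ ∑ i, (z i).toNat * variation u (unitVec d i) :=
        (variation_sum_le hu _ _).trans
          (Finset.sum_le_sum fun i _ => variation_nsmul_le hu _ _)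
    _ ≤ ∑ i, r * variation u (unitVec d i) := by
        gcongr with i
        · exact variation_nonneg _ _
        · have := hz i
          omega
    _ = r * gradNorm u := (Finset.mul_sum _ _ _).symm

lemma sum_abs_le_mul_gradNorm (hA : u.support ⊆ A) {r : ℕ} (hr : 2 * A.card ≤ r ^ d)
    (hr0 : 0 < r) : ∑ x ∈ A, |u x| ≤ 2 * r * gradNorm u := by
  let T : Finset (Site d) := Fintype.piFinset fun _ => Finset.Ico (0 : ℤ) r
  have hcard : T.card = r ^ d := by simp [T]
  have hpos : (0 : ℝ) < T.card := by rw [hcard]; positivity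
  refine le_of_mul_le_mul_left ?_ hpos
  calc T.card * ∑ x ∈ A, |u x| ≤ 2 * ∑ z ∈ T, variation u z :=
        card_mul_sum_abs_le hA (hcard ▸ hr)
    _ ≤ 2 * ∑ _z ∈ T, r * gradNorm u := by
        gcongr with _ hz
        exact variation_le_mul_gradNorm (A.finite_toSet.subset hA) (Fintype.mem_piFinset.mp hz)
    _ = T.card * (2 * r * gradNorm u) := by
        rw [Finset.sum_const, nsmul_eq_mul]
        ring

lemma one_le_rpow_one_div (d : ℕ) {n : ℕ} (hn : 1 ≤ n) : 1 ≤ (n : ℝ) ^ (1 / (d : ℝ)) :=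
  Real.one_le_rpow (Nat.one_le_cast.mpr hn) (by positivity)

lemma exists_two_mul_le_pow (hd : 1 ≤ d) {n : ℕ} (hn : 1 ≤ n) :
    ∃ r : ℕ, 0 < r ∧ 2 * n ≤ r ^ d ∧ (r : ℝ) ≤ 3 * (n : ℝ) ^ (1 / (d : ℝ)) := by
  set s : ℝ := (n : ℝ) ^ (1 / (d : ℝ))
  have hs : 1 ≤ s := one_le_rpow_one_div d hn
  have hsd : s ^ d = n := by
    rw [← Real.rpow_natCast, ← Real.rpow_mul (by positivity),
      one_div_mul_cancel (by positivity), Real.rpow_one]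
  refine ⟨⌈2 * s⌉₊, Nat.ceil_pos.mpr (by positivity), ?_, ?_⟩
  · have hpow : (2 : ℝ) * n ≤ (⌈2 * s⌉₊ : ℝ) ^ d :=
      calc (2 : ℝ) * n ≤ 2 ^ d * s ^ d := by
            rw [hsd]
            gcongr
            exact le_self_pow₀ one_le_two (by omega)
        _ = (2 * s) ^ d := (mul_pow _ _ _).symm
        _ ≤ (⌈2 * s⌉₊ : ℝ) ^ d := by gcongr; exact Nat.le_ceil _
    exact_mod_cast hpow
  · linarith [(Nat.ceil_lt_add_one (show 0 ≤ 2 * s by positivity)).le]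

lemma sum_abs_le_gradNorm (hd : 1 ≤ d) (hA : u.support ⊆ A) :
    ∑ x ∈ A, |u x| ≤ 6 * (A.card : ℝ) ^ (1 / (d : ℝ)) * gradNorm u := by
  rcases A.eq_empty_or_nonempty with rfl | hne
  · have := gradNorm_nonneg u
    rw [Finset.sum_empty]
    positivity
  · obtain ⟨r, hr0, hr, hrle⟩ := exists_two_mul_le_pow hd hne.card_pos
    refine (sum_abs_le_mul_gradNorm hA hr hr0).trans ?_
    exact mul_le_mul_of_nonneg_right (by linarith) (gradNorm_nonneg u)

lemma sum_tsum_sub_sq (hA : u.support ⊆ A) :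
    ∑ i, ∑' x, (u (x + unitVec d i) - u x) ^ 2 = -(2 * d) * ∑ x ∈ A, u x * laplacian d u x := by
  simp_rw [tsum_sub_sq hA]
  rw [Finset.sum_comm, Finset.mul_sum]
  refine Finset.sum_congr rfl fun x _ => ?_
  calc ∑ i, u x * ((u x - u (x + unitVec d i)) + (u x - u (x - unitVec d i)))
      = -u x * ∑ ε, (u (x + dirVec d ε) - u x) := by
        rw [sum_dirVec fun e => u (x + e) - u x, Finset.mul_sum]
        refine Finset.sum_congr rfl fun i _ => ?_
        rw [← sub_eq_add_neg x]
        ring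
    _ = -(2 * d) * (u x * laplacian d u x) := by
        rw [sum_dirVec_sub]
        ring

lemma gradNorm_sq_le (hA : u.support ⊆ A) :
    gradNorm u ^ 2 ≤ 4 * d ^ 2 * A.card * -∑ x ∈ A, u x * laplacian d u x :=
  calc gradNorm u ^ 2 ≤ d * ∑ i, variation u (unitVec d i) ^ 2 := by
        simpa [gradNorm] using sq_sum_le_card_mul_sum_sq (s := Finset.univ)
          (f := fun i => variation u (unitVec d i))
    _ ≤ d * ∑ i, 2 * A.card * ∑' x, (u (x + unitVec d i) - u x) ^ 2 := by
        gcongr with i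
        exact variation_sq_le hA _
    _ = 4 * d ^ 2 * A.card * -∑ x ∈ A, u x * laplacian d u x := by
        rw [← Finset.mul_sum, sum_tsum_sub_sq hA]
        ring

lemma gradNorm_exitFun_le (hd : 1 ≤ d) (A : Finset (Site d)) :
    gradNorm (exitFun d A) ≤ 24 * d ^ 2 * (A.card * (A.card : ℝ) ^ (1 / (d : ℝ))) := by
  set e := exitFun d A
  have hA : e.support ⊆ A := support_exitFun_subset hd A
  have henergy : -∑ x ∈ A, e x * laplacian d e x = ∑ x ∈ A, |e x| := by
    rw [← Finset.sum_neg_distrib]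
    refine Finset.sum_congr rfl fun x hx => ?_
    rw [laplacian_exitFun hd hx, abs_of_nonneg (exitFun_nonneg hd A x)]
    ring
  rcases (gradNorm_nonneg e).eq_or_lt with h0 | hpos
  · rw [← h0]
    positivity
  · refine le_of_mul_le_mul_right ?_ hpos
    calc gradNorm e * gradNorm e = gradNorm e ^ 2 := (sq _).symm
      _ ≤ 4 * d ^ 2 * A.card * ∑ x ∈ A, |e x| := henergy ▸ gradNorm_sq_le hA
      _ ≤ 4 * d ^ 2 * A.card * (6 * (A.card : ℝ) ^ (1 / (d : ℝ)) * gradNorm e) := by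
          gcongr
          exact sum_abs_le_gradNorm hd hA
      _ = 24 * d ^ 2 * (A.card * (A.card : ℝ) ^ (1 / (d : ℝ))) * gradNorm e := by ring

lemma sum_sum_abs_dirVec_sub_le (hu : u.support.Finite) (A : Finset (Site d)) :
    ∑ x ∈ A, ∑ ε, |u (x + dirVec d ε) - u x| ≤ 2 * gradNorm u := by
  rw [Finset.sum_comm]
  calc ∑ ε, ∑ x ∈ A, |u (x + dirVec d ε) - u x| ≤ ∑ ε, variation u (dirVec d ε) :=
        Finset.sum_le_sum fun ε _ => sum_abs_sub_le_variation hu A _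
    _ = 2 * gradNorm u := by
        simp_rw [sum_dirVec (variation u), variation_neg, ← two_mul]
        exact (Finset.mul_sum _ _ _).symm

end Gradient

/-! ## Rotor-router walks -/

section RotorRouter

variable {d : ℕ} {D : ℝ} {r : Site d → ℕ → Dir d} {A : Finset (Site d)} {c : Site d → ℕ}

/-- The total change of `f` along the first `m` rotor moves out of `x`. -/
def rotorSum (r : Site d → ℕ → Dir d) (f : Site d → ℝ) (x : Site d) (m : ℕ) : ℝ :=
  ∑ i ∈ Finset.range m, (f (x + dirVec d (r x i)) - f x)

lemma rotorSum_zero (f : Site d → ℝ) (x : Site d) : rotorSum r f x 0 = 0 := Finset.sum_range_zero _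

lemma rotorSum_succ (f : Site d → ℝ) (x : Site d) (m : ℕ) :
    rotorSum r f x (m + 1) = rotorSum r f x m + (f (x + dirVec d (r x m)) - f x) :=
  Finset.sum_range_succ _ m

lemma rotorSum_eq_sum_ncard (f : Site d → ℝ) (x : Site d) (m : ℕ) :
    rotorSum r f x m =
      ∑ ε, (({i | i < m ∧ r x i = ε} : Set ℕ).ncard : ℝ) * (f (x + dirVec d ε) - f x) := by
  rw [rotorSum, ← Finset.sum_fiberwise _ (r x)]
  refine Finset.sum_congr rfl fun ε _ => ?_
  have hfiber : {i | i < m ∧ r x i = ε} = ((Finset.range m).filter (r x · = ε) : Set ℕ) := by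
    ext i
    simp
  rw [hfiber, Set.ncard_coe_finset, ← nsmul_eq_mul, ← Finset.sum_const]
  exact Finset.sum_congr rfl fun i hi => by rw [(Finset.mem_filter.mp hi).2]

lemma HasDiscrepancy.half_le (hd : 1 ≤ d) (hr : HasDiscrepancy d D r) : 1 / 2 ≤ D := by
  have hset : {i | i < 1 ∧ r 0 i = r 0 0} = ({0} : Set ℕ) := by
    ext i
    simp +contextual
  have h := hr 0 (r 0 0) 1 le_rfl
  rw [hset, Set.ncard_singleton] at h
  have hd' : (1 : ℝ) ≤ d := by exact_mod_cast hd
  have hfreq : ((1 : ℕ) : ℝ) / (2 * d) ≤ 1 / 2 := by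
    rw [Nat.cast_one]
    gcongr
    linarith
  push_cast at h hfreq
  linarith [(abs_le.mp h).2]

lemma HasDiscrepancy.abs_rotorSum_sub_le (hd : 1 ≤ d) (hr : HasDiscrepancy d D r)
    (f : Site d → ℝ) (x : Site d) (m : ℕ) :
    |rotorSum r f x m - m * laplacian d f x| ≤ D * ∑ ε, |f (x + dirVec d ε) - f x| := by
  rcases Nat.eq_zero_or_pos m with rfl | hm
  · have := hr.half_le hd
    rw [rotorSum_zero, Nat.cast_zero, zero_mul, sub_zero, abs_zero]
    positivity
  have hmean : m * laplacian d f x = ∑ ε, m / (2 * (d : ℝ)) * (f (x + dirVec d ε) - f x) := by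
    rw [← Finset.mul_sum, sum_dirVec_sub]
    field_simp
  rw [rotorSum_eq_sum_ncard, hmean, ← Finset.sum_sub_distrib, Finset.mul_sum]
  refine (Finset.abs_sum_le_sum_abs _ _).trans (Finset.sum_le_sum fun ε _ => ?_)
  rw [← sub_mul, abs_mul]
  exact mul_le_mul_of_nonneg_right (hr x ε m hm) (abs_nonneg _)

lemma nsq_nonneg (x : Site d) : 0 ≤ nsq x := Finset.sum_nonneg fun _ _ => sq_nonneg _

lemma nsq_add_dirVec (x : Site d) (i : Fin d) (b : Bool) :
    nsq (x + dirVec d (i, b)) - nsq x = (if b then 2 else -2) * x i + 1 := by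
  unfold nsq
  rw [← Finset.sum_sub_distrib, Finset.sum_eq_single i]
  · cases b <;> simp [dirVec, unitVec] <;> ring
  · intro j _ hj
    cases b <;> simp [dirVec, unitVec, hj]
  · simp

lemma laplacian_nsq (hd : 1 ≤ d) (x : Site d) : laplacian d nsq x = 1 := by
  have : (0 : ℝ) < 2 * d := by positivity
  have hsum : ∑ ε, (nsq (x + dirVec d ε) - nsq x) = 2 * d := by
    simp_rw [Fintype.sum_prod_type, nsq_add_dirVec, Fintype.sum_bool]
    ring_nf
    simp [mul_comm]
  rw [sum_dirVec_sub] at hsum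
  exact mul_left_cancel₀ this.ne' (hsum.trans (mul_one _).symm)

/-- The `ℓ¹` norm of a lattice point. -/
def l1Norm (x : Site d) : ℝ := ∑ i, |(x i : ℝ)|

lemma sum_abs_nsq_sub_le (x : Site d) :
    ∑ ε, |nsq (x + dirVec d ε) - nsq x| ≤ 4 * l1Norm x + 2 * d := by
  have hdir : ∀ ε : Dir d, |nsq (x + dirVec d ε) - nsq x| ≤ 2 * |(x ε.1 : ℝ)| + 1 := by
    rintro ⟨i, b⟩
    rw [nsq_add_dirVec]
    refine (abs_add_le _ _).trans ?_
    cases b <;> simp [abs_mul]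
  calc ∑ ε, |nsq (x + dirVec d ε) - nsq x| ≤ ∑ ε : Dir d, (2 * |(x ε.1 : ℝ)| + 1) :=
        Finset.sum_le_sum fun ε _ => hdir ε
    _ = 4 * l1Norm x + 2 * d := by
        simp_rw [Fintype.sum_prod_type, Fintype.sum_bool]
        rw [Finset.sum_add_distrib, Finset.sum_add_distrib, ← Finset.mul_sum, Finset.sum_const,
          Finset.card_univ, Fintype.card_fin, nsmul_eq_mul, ← l1Norm]
        ring

lemma HasDiscrepancy.abs_rotorSum_nsq_sub_le (hd : 1 ≤ d) (hr : HasDiscrepancy d D r)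
    (x : Site d) (m : ℕ) : |rotorSum r nsq x m - m| ≤ D * (4 * l1Norm x + 2 * d) := by
  have hD := hr.half_le hd
  have h := hr.abs_rotorSum_sub_le hd nsq x m
  rw [laplacian_nsq hd, mul_one] at h
  refine h.trans ?_
  gcongr
  exact sum_abs_nsq_sub_le x

lemma sum_update_sub_sum {ι β M : Type*} [DecidableEq ι] [AddCommGroup M] {s : Finset ι} {p : ι}
    (hp : p ∈ s) (g : ι → β → M) (c : ι → β) (b : β) :
    ∑ x ∈ s, g x (Function.update c p b x) - ∑ x ∈ s, g x (c x) = g p b - g p (c p) := by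
  rw [← Finset.sum_sub_distrib, Finset.sum_eq_single_of_mem p hp fun x _ hx => by
    rw [Function.update_of_ne hx, sub_self], Function.update_self]

lemma walkState_succ (r : Site d → ℕ → Dir d) (c : Site d → ℕ) (t : ℕ) :
    walkState r c (t + 1) = rstep r (walkState r c t) :=
  Function.iterate_succ_apply' _ _ _

lemma walkState_visits_of_notMem {t : ℕ} (ht : ∀ s < t, (walkState r c s).1 ∈ A) {x : Site d}
    (hx : x ∉ A) : (walkState r c t).2 x = c x := by
  induction t with
  | zero => rfl
  | succ t ih =>
    rw [walkState_succ]
    have hne : x ≠ (walkState r c t).1 := fun h => hx (h ▸ ht t t.lt_succ_self)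
    exact (Function.update_of_ne hne _ _).trans (ih fun s hs => ht s (hs.trans t.lt_succ_self))

lemma sum_walkState_visits {t : ℕ} (ht : ∀ s < t, (walkState r c s).1 ∈ A) :
    ∑ x ∈ A, ((walkState r c t).2 x : ℝ) = ∑ x ∈ A, (c x : ℝ) + t := by
  induction t with
  | zero => simp [walkState]
  | succ t ih =>
    have hstep := sum_update_sub_sum (ht t t.lt_succ_self) (fun _ (m : ℕ) => (m : ℝ))
      (walkState r c t).2 ((walkState r c t).2 (walkState r c t).1 + 1)
    rw [walkState_succ]
    push_cast at hstep ⊢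
    dsimp only [rstep]
    linarith [ih fun s hs => ht s (hs.trans t.lt_succ_self)]

/-- Conservation law of the rotor-router walk: every step moves the change of `f` into the rotor
sum of the site just left. -/
lemma walkState_conservation {t : ℕ} (ht : ∀ s < t, (walkState r c s).1 ∈ A) (f : Site d → ℝ) :
    f (walkState r c t).1 + ∑ x ∈ A, rotorSum r f x (c x) =
      f 0 + ∑ x ∈ A, rotorSum r f x ((walkState r c t).2 x) := by
  induction t with
  | zero => rfl
  | succ t ih =>
    have hstep := sum_update_sub_sum (ht t t.lt_succ_self) (rotorSum r f)
      (walkState r c t).2 ((walkState r c t).2 (walkState r c t).1 + 1)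
    rw [rotorSum_succ] at hstep
    rw [walkState_succ]
    dsimp only [rstep]
    linarith [ih fun s hs => ht s (hs.trans t.lt_succ_self)]

/-- `‖x‖²` grows by about one per step along the walk, so a walk confined to `A` is finite. -/
lemma HasDiscrepancy.exists_walkState_notMem (hd : 1 ≤ d) (hr : HasDiscrepancy d D r)
    (A : Finset (Site d)) (c : Site d → ℕ) : ∃ t, (walkState r c t).1 ∉ A := by
  by_contra! hstay
  set E := ∑ x ∈ A, D * (4 * l1Norm x + 2 * d)
  set H := ∑ x ∈ A, rotorSum r nsq x (c x)
  obtain ⟨t, ht⟩ := exists_nat_gt (∑ x ∈ A, nsq x + E + H)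
  have hpos : nsq (walkState r c t).1 ≤ ∑ x ∈ A, nsq x :=
    Finset.single_le_sum (fun x _ => nsq_nonneg x) (hstay t)
  have hvisits : (t : ℝ) ≤ ∑ x ∈ A, ((walkState r c t).2 x : ℝ) := by
    rw [sum_walkState_visits fun s _ => hstay s]
    exact le_add_of_nonneg_left (Finset.sum_nonneg fun _ _ => Nat.cast_nonneg _)
  have hrotor : ∑ x ∈ A, ((walkState r c t).2 x : ℝ) - E ≤
      ∑ x ∈ A, rotorSum r nsq x ((walkState r c t).2 x) := by
    rw [← Finset.sum_sub_distrib]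
    refine Finset.sum_le_sum fun x _ => ?_
    linarith [(abs_le.mp (hr.abs_rotorSum_nsq_sub_le hd x ((walkState r c t).2 x))).1]
  linarith [walkState_conservation (t := t) (fun s _ => hstay s) nsq, nsq_nonneg (0 : Site d)]

/-- `c` counts the visits to the sites of `A` in a process moving `#A` particles from the origin by
rotor-router steps until each site of `A` holds exactly one of them. It is encoded by the resulting
conservation law, which holds for every test function. -/
def IsOdometer (r : Site d → ℕ → Dir d) (A : Finset (Site d)) (c : Site d → ℕ) : Prop :=
  (∀ x ∉ A, c x = 0) ∧
    ∀ f : Site d → ℝ, ∑ x ∈ A, f x = A.card * f 0 + ∑ x ∈ A, rotorSum r f x (c x)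

lemma isOdometer_singleton_zero (r : Site d → ℕ → Dir d) :
    IsOdometer r {0} fun _ => 0 :=
  ⟨fun _ _ => rfl, fun f => by simp [rotorSum_zero]⟩

lemma IsOdometer.insert_walkState (h : IsOdometer r A c) {t : ℕ}
    (hin : ∀ s < t, (walkState r c s).1 ∈ A) (hout : (walkState r c t).1 ∉ A) :
    IsOdometer r (insert (walkState r c t).1 A) (walkState r c t).2 := by
  have hoff : ∀ x ∉ A, (walkState r c t).2 x = 0 := fun x hx =>
    (walkState_visits_of_notMem hin hx).trans (h.1 x hx)
  refine ⟨fun x hx => hoff x fun hxA => hx (Finset.mem_insert_of_mem hxA), fun f => ?_⟩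
  rw [Finset.sum_insert hout, Finset.sum_insert hout, Finset.card_insert_of_notMem hout,
    hoff _ hout, rotorSum_zero, h.2 f]
  push_cast
  linarith [walkState_conservation hin f]

lemma HasDiscrepancy.exists_isOdometer_aggState (hd : 1 ≤ d) (hr : HasDiscrepancy d D r) (n : ℕ) :
    ∃ A : Finset (Site d), (aggState r n).1 = A ∧ A.card = n + 1 ∧
      IsOdometer r A (aggState r n).2.1 := by
  induction n with
  | zero => exact ⟨{0}, by simp [aggState], rfl, isOdometer_singleton_zero r⟩
  | succ n ih =>
    obtain ⟨A, hA, hcard, hodo⟩ := ih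
    let c := (aggState r n).2.1
    let τ := exitSteps r (aggState r n).1 c
    have hin : ∀ s < τ, (walkState r c s).1 ∈ A := fun s hs => by
      have := Nat.notMem_of_lt_sInf hs
      rwa [Set.mem_ofPred_eq, not_not, hA] at this
    have hout : (walkState r c τ).1 ∉ A := by
      have : (walkState r c τ).1 ∉ (aggState r n).1 :=
        Nat.sInf_mem (s := {t | (walkState r c t).1 ∉ (aggState r n).1})
          (hA ▸ hr.exists_walkState_notMem hd A c)
      rwa [hA] at this
    refine ⟨insert (walkState r c τ).1 A, ?_, ?_, hodo.insert_walkState hin hout⟩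
    · rw [Finset.coe_insert, ← hA]
      rfl
    · rw [Finset.card_insert_of_notMem hout, hcard]

lemma HasDiscrepancy.exists_isOdometer_aggRegion (hd : 1 ≤ d) (hr : HasDiscrepancy d D r) {n : ℕ}
    (hn : 1 ≤ n) : ∃ (A : Finset (Site d)) (c : Site d → ℕ),
      aggRegion r n = A ∧ A.card = n ∧ IsOdometer r A c := by
  obtain ⟨A, hA, hcard, hodo⟩ := hr.exists_isOdometer_aggState hd (n - 1)
  exact ⟨A, _, hA, by omega, hodo⟩

lemma IsOdometer.sum_nsq_le (h : IsOdometer r A c) (hd : 1 ≤ d) (hr : HasDiscrepancy d D r) :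
    ∑ x ∈ A, nsq x ≤ ∑ x ∈ A, (c x : ℝ) + D * (4 * ∑ x ∈ A, l1Norm x + 2 * d * A.card) :=
  calc ∑ x ∈ A, nsq x = ∑ x ∈ A, rotorSum r nsq x (c x) := by
        rw [h.2]
        simp [nsq]
    _ ≤ ∑ x ∈ A, (c x + D * (4 * l1Norm x + 2 * d)) := by
        refine Finset.sum_le_sum fun x _ => ?_
        linarith [(abs_le.mp (hr.abs_rotorSum_nsq_sub_le hd x (c x))).2]
    _ = ∑ x ∈ A, (c x : ℝ) + D * (4 * ∑ x ∈ A, l1Norm x + 2 * d * A.card) := by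
        rw [Finset.sum_add_distrib, ← Finset.mul_sum, Finset.sum_add_distrib, ← Finset.mul_sum,
          Finset.sum_const, nsmul_eq_mul]
        ring

lemma IsOdometer.sum_visits_le (h : IsOdometer r A c) (hd : 1 ≤ d) (hr : HasDiscrepancy d D r) :
    ∑ x ∈ A, (c x : ℝ) ≤ ∑ x ∈ A, (exitFun d A 0 - exitFun d A x) +
      2 * D * gradNorm (exitFun d A) := by
  set u := exitFun d A
  have hD := hr.half_le hd
  have hrotor : ∑ x ∈ A, rotorSum r u x (c x) ≤
      -∑ x ∈ A, (c x : ℝ) + D * ∑ x ∈ A, ∑ ε, |u (x + dirVec d ε) - u x| := by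
    rw [← Finset.sum_neg_distrib, Finset.mul_sum, ← Finset.sum_add_distrib]
    refine Finset.sum_le_sum fun x hx => ?_
    have := (abs_le.mp (hr.abs_rotorSum_sub_le hd u x (c x))).2
    rw [laplacian_exitFun hd hx] at this
    linarith
  have hgrad := mul_le_mul_of_nonneg_left (sum_sum_abs_dirVec_sub_le
    (A.finite_toSet.subset (support_exitFun_subset hd A)) A) (show 0 ≤ D by linarith)
  rw [Finset.sum_sub_distrib, Finset.sum_const, nsmul_eq_mul]
  linarith [h.2 u]

end RotorRouter

/-! ## Exit times from balls and second moments -/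

section Balls

variable {d : ℕ}

lemma ballVol_pos (d : ℕ) : 0 < ballVol d :=
  ENNReal.toReal_pos (Metric.measure_ball_pos _ _ one_pos).ne' measure_ball_lt_top.ne

/-- The radius of the Euclidean ball of volume `t`. -/
def ballRadius (d : ℕ) (t : ℝ) : ℝ := (t / ballVol d) ^ (1 / (d : ℝ))

lemma ballRadius_nonneg (d : ℕ) {t : ℝ} (ht : 0 ≤ t) : 0 ≤ ballRadius d t :=
  Real.rpow_nonneg (div_nonneg ht (ballVol_pos d).le) _

lemma ballRadius_one_pos (d : ℕ) : 0 < ballRadius d 1 :=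
  Real.rpow_pos_of_pos (div_pos one_pos (ballVol_pos d)) _

lemma ballRadius_mono (d : ℕ) {s t : ℝ} (hs : 0 ≤ s) (hst : s ≤ t) :
    ballRadius d s ≤ ballRadius d t := by
  have := ballVol_pos d
  unfold ballRadius
  gcongr

lemma ballRadius_pow (hd : 1 ≤ d) {t : ℝ} (ht : 0 ≤ t) : ballRadius d t ^ d = t / ballVol d := by
  rw [ballRadius, one_div,
    Real.rpow_inv_natCast_pow (div_nonneg ht (ballVol_pos d).le) (by omega)]

lemma ballRadius_eq_mul_rpow (d : ℕ) {t : ℝ} (ht : 0 ≤ t) :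
    ballRadius d t = ballRadius d 1 * t ^ (1 / (d : ℝ)) := by
  have := ballVol_pos d
  rw [ballRadius, ballRadius, ← Real.mul_rpow (by positivity) ht, one_div_mul_eq_div]

lemma ballRadius_sq (d : ℕ) {t : ℝ} (ht : 0 ≤ t) :
    ballRadius d t ^ 2 = ballRadius d 1 ^ 2 * t ^ (2 / (d : ℝ)) := by
  rw [ballRadius_eq_mul_rpow d ht, mul_pow, ← Real.rpow_mul_natCast ht]
  ring_nf

lemma enorm_nonneg (x : Site d) : 0 ≤ enorm x := Real.sqrt_nonneg _

lemma enorm_sq (x : Site d) : enorm x ^ 2 = nsq x := Real.sq_sqrt (nsq_nonneg x)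

lemma abs_apply_le_enorm (x : Site d) (i : Fin d) : |(x i : ℝ)| ≤ enorm x :=
  Real.abs_le_sqrt (Finset.single_le_sum (f := fun i => (x i : ℝ) ^ 2) (fun _ _ => sq_nonneg _)
    (Finset.mem_univ i))

lemma nsq_add_dirVec_le (x : Site d) (ε : Dir d) : nsq (x + dirVec d ε) ≤ (enorm x + 1) ^ 2 := by
  obtain ⟨i, b⟩ := ε
  have hstep := nsq_add_dirVec x i b
  have hi := abs_le.mp (abs_apply_le_enorm x i)
  rw [add_sq, enorm_sq]
  cases b <;> simp at hstep <;> linarith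

lemma enorm_lt_ballRadius (hd : 1 ≤ d) {n : ℕ} {x : Site d} (hx : x ∈ lball d n) :
    enorm x < ballRadius d n := by
  refine lt_of_pow_lt_pow_left₀ d (ballRadius_nonneg d n.cast_nonneg) ?_
  rw [ballRadius_pow hd n.cast_nonneg, lt_div_iff₀' (ballVol_pos d)]
  exact hx

lemma lball_finite (hd : 1 ≤ d) (n : ℕ) : (lball d n).Finite := by
  refine (Set.finite_Icc (fun _ => -⌈ballRadius d n⌉ : Site d) fun _ => ⌈ballRadius d n⌉).subset
    fun x hx => ?_
  have hcoord (i : Fin d) : |x i| ≤ ⌈ballRadius d n⌉ := by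
    have : (|x i| : ℝ) ≤ ⌈ballRadius d n⌉ :=
      ((abs_apply_le_enorm x i).trans (enorm_lt_ballRadius hd hx).le).trans (Int.le_ceil _)
    exact_mod_cast this
  exact ⟨fun i => (abs_le.mp (hcoord i)).1, fun i => (abs_le.mp (hcoord i)).2⟩

lemma exitFun_lball_le (hd : 1 ≤ d) {n : ℕ} (hn : 1 ≤ n) :
    exitFun d (lball d n) 0 ≤ (ballRadius d n + 1) ^ 2 := by
  lift lball d n to Finset (Site d) using lball_finite hd n with B hB
  have hmem (x : Site d) : x ∈ B ↔ x ∈ lball d n := by rw [← hB, Finset.mem_coe]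
  have hzero : nsq (0 : Site d) = 0 := by simp [nsq]
  have h0 : (0 : Site d) ∈ B := by
    rw [hmem, lball, Set.mem_ofPred_eq, enorm, hzero, Real.sqrt_zero, zero_pow (by omega), mul_zero]
    exact_mod_cast hn
  let w : Site d → ℝ := (fun _ => (ballRadius d n + 1) ^ 2) - nsq
  have hw : exitFun d B 0 ≤ w 0 := by
    refine exitFun_le hd (fun x _ => ?_) (fun x hx ε _ => ?_) 0 h0
    · rw [map_sub, Pi.sub_apply, laplacian_const hd, laplacian_nsq hd]
      norm_num
    · refine sub_nonneg.mpr ((nsq_add_dirVec_le x ε).trans ?_)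
      have := enorm_nonneg x
      change (enorm x + 1) ^ 2 ≤ (ballRadius d n + 1) ^ 2
      gcongr
      exact (enorm_lt_ballRadius hd ((hmem x).mp hx)).le
  simpa [w, hzero] using hw

lemma ebar_le_of_card (hd : 1 ≤ d) (A : Finset (Site d)) :
    ebar d A ≤ 6 * (A.card : ℝ) ^ (1 / (d : ℝ)) *
      (24 * d ^ 2 * (A.card * (A.card : ℝ) ^ (1 / (d : ℝ)))) := by
  refine ebar_le fun x => ?_
  calc exitFun d A x ≤ ∑ y ∈ A, |exitFun d A y| := by
        by_cases hx : x ∈ A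
        · exact (le_abs_self _).trans (Finset.single_le_sum (f := fun y => |exitFun d A y|)
            (fun _ _ => abs_nonneg _) hx)
        · rw [exitFun_of_notMem hd hx]
          exact Finset.sum_nonneg fun _ _ => abs_nonneg _
    _ ≤ 6 * (A.card : ℝ) ^ (1 / (d : ℝ)) * gradNorm (exitFun d A) :=
        sum_abs_le_gradNorm hd (support_exitFun_subset hd A)
    _ ≤ _ := by
        gcongr
        exact gradNorm_exitFun_le hd A

lemma le_phi (hd : 1 ≤ d) (A : Finset (Site d)) :
    ebar d A - exitFun d (lball d A.card) 0 ≤ phi d A.card := by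
  refine le_csSup ⟨6 * (A.card : ℝ) ^ (1 / (d : ℝ)) *
    (24 * d ^ 2 * (A.card * (A.card : ℝ) ^ (1 / (d : ℝ)))) - exitFun d (lball d A.card) 0, ?_⟩
    ⟨A, A.finite_toSet, Set.ncard_coe_finset A, rfl⟩
  rintro _ ⟨S, hS, hcard, rfl⟩
  lift S to Finset (Site d) using hS
  rw [Set.ncard_coe_finset] at hcard
  rw [← hcard]
  gcongr
  exact ebar_le_of_card hd S

lemma sum_exitFun_zero_sub_le (hd : 1 ≤ d) (A : Finset (Site d)) :
    ∑ x ∈ A, (exitFun d A 0 - exitFun d A x) ≤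
      PhiSum d A.card + ∑ j ∈ Finset.Icc 1 A.card, (ballRadius d j + 1) ^ 2 := by
  have hphi (S : Finset (Site d)) :
      exitFun d S 0 ≤ phi d S.card + exitFun d (lball d S.card) 0 := by
    linarith [le_phi hd S, exitFun_le_ebar hd S 0]
  refine (sum_sub_le_sum_of_superlevel hd (K := fun j => phi d j + exitFun d (lball d j) 0) hphi A
    (fun x hx => (laplacian_exitFun hd hx).ge) fun x _ y hy => ?_).trans ?_
  · rw [exitFun_of_notMem hd hy]
    exact exitFun_nonneg hd A x
  · rw [PhiSum, ← Finset.sum_add_distrib]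
    refine Finset.sum_le_sum fun j hj => ?_
    gcongr
    exact exitFun_lball_le hd (Finset.mem_Icc.mp hj).1

lemma sum_range_rpow_le {p : ℝ} (hp : 0 ≤ p) (n : ℕ) :
    ∑ j ∈ Finset.range n, (j : ℝ) ^ p ≤ (n : ℝ) ^ (p + 1) / (p + 1) := by
  have hmono : MonotoneOn (fun x : ℝ => x ^ p) (Set.Icc 0 (0 + n)) := fun x hx y _ hxy =>
    Real.rpow_le_rpow hx.1 hxy hp
  calc ∑ j ∈ Finset.range n, (j : ℝ) ^ p ≤ ∫ x in (0 : ℝ)..n, x ^ p := by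
        simpa using hmono.sum_le_integral
    _ = (n : ℝ) ^ (p + 1) / (p + 1) := by
        rw [integral_rpow (Or.inl (by linarith)), Real.zero_rpow (by linarith), sub_zero]

lemma sum_Icc_rpow_le {p : ℝ} (hp : 0 ≤ p) (n : ℕ) :
    ∑ j ∈ Finset.Icc 1 n, (j : ℝ) ^ p ≤ (n : ℝ) ^ (p + 1) / (p + 1) + (n : ℝ) ^ p := by
  calc ∑ j ∈ Finset.Icc 1 n, (j : ℝ) ^ p ≤ ∑ j ∈ Finset.range (n + 1), (j : ℝ) ^ p := by
        refine Finset.sum_le_sum_of_subset_of_nonneg (fun j hj => ?_) fun _ _ _ => by positivity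
        exact Finset.mem_range_succ_iff.mpr (Finset.mem_Icc.mp hj).2
    _ ≤ (n : ℝ) ^ (p + 1) / (p + 1) + (n : ℝ) ^ p := by
        rw [Finset.sum_range_succ]
        gcongr
        exact sum_range_rpow_le hp n

/-- The main term `d / (d + 2) * n R²` is the second moment of the ball of volume `n`. -/
lemma sum_ballRadius_add_one_sq_le (hd : 1 ≤ d) {n : ℕ} (hn : 1 ≤ n) :
    ∑ j ∈ Finset.Icc 1 n, (ballRadius d j + 1) ^ 2 ≤
      d / (d + 2) * (n * ballRadius d n ^ 2) + ballRadius d n ^ 2 +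
        n * (2 * ballRadius d n + 1) := by
  have hn0 : (0 : ℝ) < n := by positivity
  have hterm : ∀ j ∈ Finset.Icc 1 n, (ballRadius d j + 1) ^ 2 ≤
      ballRadius d 1 ^ 2 * (j : ℝ) ^ (2 / (d : ℝ)) + (2 * ballRadius d n + 1) := fun j hj => by
    have hmono := ballRadius_mono d j.cast_nonneg (Nat.cast_le.mpr (Finset.mem_Icc.mp hj).2)
    rw [← ballRadius_sq d j.cast_nonneg]
    linarith
  have hmain : (n : ℝ) ^ (2 / (d : ℝ) + 1) / (2 / (d : ℝ) + 1) =
      d / (d + 2) * (n * (n : ℝ) ^ (2 / (d : ℝ))) := by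
    rw [Real.rpow_add_one hn0.ne']
    have : (d : ℝ) ≠ 0 := by positivity
    field_simp
    ring
  calc ∑ j ∈ Finset.Icc 1 n, (ballRadius d j + 1) ^ 2
      ≤ ballRadius d 1 ^ 2 * ∑ j ∈ Finset.Icc 1 n, (j : ℝ) ^ (2 / (d : ℝ)) +
          n * (2 * ballRadius d n + 1) := by
        refine (Finset.sum_le_sum hterm).trans_eq ?_
        rw [Finset.sum_add_distrib, ← Finset.mul_sum, Finset.sum_const, Nat.card_Icc,
          Nat.add_sub_cancel, nsmul_eq_mul]
    _ ≤ ballRadius d 1 ^ 2 *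
          (d / (d + 2) * (n * (n : ℝ) ^ (2 / (d : ℝ))) + (n : ℝ) ^ (2 / (d : ℝ))) +
          n * (2 * ballRadius d n + 1) := by
        rw [← hmain]
        gcongr
        exact sum_Icc_rpow_le (by positivity) n
    _ = _ := by
        rw [ballRadius_sq d hn0.le]
        ring

lemma IsOdometer.sum_nsq_le_phiSum {D : ℝ} {r : Site d → ℕ → Dir d} {A : Finset (Site d)}
    {c : Site d → ℕ} (h : IsOdometer r A c) (hd : 1 ≤ d) (hr : HasDiscrepancy d D r) :
    ∑ x ∈ A, nsq x ≤
      PhiSum d A.card + ∑ j ∈ Finset.Icc 1 A.card, (ballRadius d j + 1) ^ 2 +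
        48 * d ^ 2 * D * (A.card * (A.card : ℝ) ^ (1 / (d : ℝ))) +
        D * (4 * ∑ x ∈ A, l1Norm x + 2 * d * A.card) := by
  have hgrad := mul_le_mul_of_nonneg_left (gradNorm_exitFun_le hd A)
    (show 0 ≤ 2 * D by linarith [hr.half_le hd])
  linarith [h.sum_nsq_le hd hr, h.sum_visits_le hd hr, sum_exitFun_zero_sub_le hd A]

end Balls

/-! ## Cubes centred at lattice points -/

section Cells

variable {d : ℕ}

/-- The half-open unit cube centred at `x`. Unlike the closed cubes making up `A^□`, these are
disjoint. -/
def cell (x : Site d) : Set (EuclideanSpace ℝ (Fin d)) := {z | ∀ i, round (z i) = x i}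

/-- The disjoint version of `A^□`, from which it differs by a null set. -/
def cellUnion (A : Finset (Site d)) : Set (EuclideanSpace ℝ (Fin d)) := ⋃ x ∈ A, cell x

lemma pairwise_disjoint_cell : Pairwise (Function.onFun Disjoint (cell (d := d))) :=
  fun _ _ hxy => Set.disjoint_left.mpr fun _ hx hy => hxy (funext fun i => (hx i).symm.trans (hy i))

lemma cell_eq_preimage (x : Site d) :
    cell x = WithLp.ofLp ⁻¹'
      Set.univ.pi fun i => Set.Ico ((x i : ℝ) - 1 / 2) ((x i : ℝ) + 1 / 2) := by
  ext z
  simp only [cell, Set.mem_ofPred_eq, Set.mem_preimage, Set.mem_univ_pi, Set.mem_Ico, round_eq,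
    Int.floor_eq_iff]
  refine forall_congr' fun i => ⟨fun h => ⟨?_, ?_⟩, fun h => ⟨?_, ?_⟩⟩ <;> linarith [h.1, h.2]

lemma measurableSet_cell (x : Site d) : MeasurableSet (cell x) := by
  rw [cell_eq_preimage]
  exact (PiLp.volume_preserving_ofLp (Fin d)).measurable
    (MeasurableSet.univ_pi fun _ => measurableSet_Ico)

lemma volume_cell (x : Site d) : volume (cell x) = 1 := by
  rw [cell_eq_preimage, (PiLp.volume_preserving_ofLp (Fin d)).measure_preimage
    (MeasurableSet.univ_pi fun _ => measurableSet_Ico).nullMeasurableSet, Real.volume_pi_Ico]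
  refine Finset.prod_eq_one fun i _ => ?_
  ring_nf
  exact ENNReal.ofReal_one

lemma measurableSet_cellUnion (A : Finset (Site d)) : MeasurableSet (cellUnion A) :=
  A.measurableSet_biUnion fun x _ => measurableSet_cell x

lemma volume_cellUnion (A : Finset (Site d)) : volume (cellUnion A) = A.card := by
  rw [cellUnion, measure_biUnion_finset (pairwise_disjoint_cell.set_pairwise _)
    fun x _ => measurableSet_cell x]
  simp [volume_cell]

lemma box_singleton_ae_eq_cell (x : Site d) : box d {x} =ᵐ[volume] cell x := by
  have hbox : box d {x} = WithLp.ofLp ⁻¹'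
      Set.univ.pi fun i => Set.Icc ((x i : ℝ) - 1 / 2) ((x i : ℝ) + 1 / 2) := by
    ext z
    simp only [box, Set.mem_ofPred_eq, Set.mem_singleton_iff, exists_eq_left, Set.mem_preimage,
      Set.mem_univ_pi, Set.mem_Icc, abs_le]
    refine forall_congr' fun i => ⟨fun h => ⟨?_, ?_⟩, fun h => ⟨?_, ?_⟩⟩ <;> linarith [h.1, h.2]
  rw [hbox, cell_eq_preimage, Set.pi_univ_Icc]
  exact ((PiLp.volume_preserving_ofLp (Fin d)).quasiMeasurePreserving.preimage_ae_eq
    Measure.univ_pi_Ico_ae_eq_Icc).symm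

lemma box_ae_eq_cellUnion (A : Finset (Site d)) : box d A =ᵐ[volume] cellUnion A := by
  have hbox : box d A = ⋃ x ∈ A, box d {x} := by
    ext z
    simp [box]
  rw [hbox]
  exact A.eventuallyEq_iUnion fun x _ => box_singleton_ae_eq_cell x

lemma norm_sq_le_of_mem_cell {x : Site d} {z : EuclideanSpace ℝ (Fin d)} (hz : z ∈ cell x) :
    ‖z‖ ^ 2 ≤ nsq x + l1Norm x + d / 4 := by
  have hsum : nsq x + l1Norm x + d / 4 = ∑ i, (|(x i : ℝ)| + 1 / 2) ^ 2 := by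
    have hquarter : (d : ℝ) / 4 = ∑ _i : Fin d, (1 / 4 : ℝ) := by simp [div_eq_mul_inv]
    rw [nsq, l1Norm, hquarter, ← Finset.sum_add_distrib, ← Finset.sum_add_distrib]
    refine Finset.sum_congr rfl fun i _ => ?_
    rw [add_sq, sq_abs]
    ring
  rw [EuclideanSpace.norm_sq_eq, hsum]
  refine Finset.sum_le_sum fun i _ => ?_
  have hround := abs_sub_round (z i)
  rw [hz i] at hround
  have habs : ‖z i‖ ≤ |(x i : ℝ)| + 1 / 2 := by
    rw [Real.norm_eq_abs]
    linarith [abs_sub_abs_le_abs_sub (z i) (x i)]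
  gcongr

lemma integrableOn_norm_sq_cell (x : Site d) :
    IntegrableOn (fun z : EuclideanSpace ℝ (Fin d) => ‖z‖ ^ 2) (cell x) := by
  refine Measure.integrableOn_of_bounded (M := nsq x + l1Norm x + d / 4)
    (by rw [volume_cell]; exact ENNReal.one_ne_top) (by fun_prop) ?_
  filter_upwards [ae_restrict_mem (measurableSet_cell x)] with z hz
  rw [Real.norm_eq_abs, abs_of_nonneg (sq_nonneg _)]
  exact norm_sq_le_of_mem_cell hz

lemma integrableOn_norm_sq_cellUnion (A : Finset (Site d)) :
    IntegrableOn (fun z : EuclideanSpace ℝ (Fin d) => ‖z‖ ^ 2) (cellUnion A) :=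
  integrableOn_finset_iUnion.mpr fun x _ => integrableOn_norm_sq_cell x

lemma setIntegral_norm_sq_cell_le (x : Site d) :
    ∫ z in cell x, ‖z‖ ^ 2 ≤ nsq x + l1Norm x + d / 4 := by
  have hvol : volume (cell x) ≠ ⊤ := by
    rw [volume_cell]
    exact ENNReal.one_ne_top
  calc ∫ z in cell x, ‖z‖ ^ 2 ≤ ∫ _ in cell x, (nsq x + l1Norm x + d / 4) :=
        setIntegral_mono_on (integrableOn_norm_sq_cell x) (integrableOn_const hvol)
          (measurableSet_cell x) fun _ hz => norm_sq_le_of_mem_cell hz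
    _ = nsq x + l1Norm x + d / 4 := by
        rw [setIntegral_const, measureReal_def, volume_cell, ENNReal.toReal_one, one_smul]

lemma setIntegral_norm_sq_cellUnion_le (A : Finset (Site d)) :
    ∫ z in cellUnion A, ‖z‖ ^ 2 ≤
      ∑ x ∈ A, nsq x + ∑ x ∈ A, l1Norm x + A.card * ((d : ℝ) / 4) := by
  rw [cellUnion, integral_biUnion_finset _ (fun x _ => measurableSet_cell x)
    (pairwise_disjoint_cell.set_pairwise _) fun x _ => integrableOn_norm_sq_cell x]
  refine (Finset.sum_le_sum fun x _ => setIntegral_norm_sq_cell_le x).trans_eq ?_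
  rw [Finset.sum_add_distrib, Finset.sum_add_distrib, Finset.sum_const, nsmul_eq_mul]

end Cells

/-! ## Stability of the second moment of a ball -/

section SecondMoment

open Module Metric

variable {E : Type*} [NormedAddCommGroup E]

lemma sq_sub_norm_sq_nonneg {R : ℝ} {z : E} (hz : z ∈ closedBall 0 R) : 0 ≤ R ^ 2 - ‖z‖ ^ 2 := by
  have := mem_closedBall_zero_iff.mp hz
  rw [sub_nonneg]
  gcongr

variable [NormedSpace ℝ E] [FiniteDimensional ℝ E] [MeasurableSpace E] [BorelSpace E]
  (μ : Measure E) [μ.IsAddHaarMeasure]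

lemma setIntegral_norm_sq_closedBall [Nontrivial E] {R : ℝ} (hR : 0 ≤ R) :
    ∫ z in closedBall (0 : E) R, ‖z‖ ^ 2 ∂μ =
      finrank ℝ E / (finrank ℝ E + 2) * (μ.real (closedBall 0 R) * R ^ 2) := by
  set k := finrank ℝ E
  have hk : k - 1 + 2 = k + 1 := by
    have : 0 < k := finrank_pos
    omega
  have hball : (closedBall (0 : E) R).indicator (fun z => ‖z‖ ^ 2) =
      fun z => (Set.Iic R).indicator (fun ρ => ρ ^ 2) ‖z‖ := by
    funext z
    simp [Set.indicator]
  have hradial : ∀ ρ : ℝ, ρ ^ (k - 1) • (Set.Iic R).indicator (fun ρ => ρ ^ 2) ρ =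
      (Set.Iic R).indicator (fun ρ => ρ ^ (k + 1)) ρ := fun ρ => by
    by_cases hρ : ρ ∈ Set.Iic R
    · rw [Set.indicator_of_mem hρ, Set.indicator_of_mem hρ, smul_eq_mul, ← pow_add, hk]
    · rw [Set.indicator_of_notMem hρ, Set.indicator_of_notMem hρ, smul_zero]
  rw [← integral_indicator isClosed_closedBall.measurableSet, hball, integral_fun_norm_addHaar,
    Measure.addHaar_real_closedBall μ _ hR]
  simp only [k, hradial]
  rw [setIntegral_indicator measurableSet_Iic, Set.Ioi_inter_Iic,
    ← intervalIntegral.integral_of_le hR, integral_pow, nsmul_eq_mul, smul_eq_mul]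
  push_cast
  rw [zero_pow (by omega)]
  field_simp
  ring

lemma measureReal_closedBall_diff_le {R δ : ℝ} (hR : 0 ≤ R) (hδ : 0 ≤ δ) (hδ1 : δ ≤ 1) :
    μ.real (closedBall (0 : E) R \ closedBall 0 ((1 - δ) * R)) ≤
      finrank ℝ E * δ * μ.real (closedBall (0 : E) R) := by
  have hsub : closedBall (0 : E) ((1 - δ) * R) ⊆ closedBall 0 R :=
    closedBall_subset_closedBall (mul_le_of_le_one_left hR (by linarith))
  have hbernoulli : 1 - finrank ℝ E * δ ≤ (1 - δ) ^ finrank ℝ E := by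
    simpa [sub_eq_add_neg] using one_add_mul_le_pow (a := -δ) (by linarith) (finrank ℝ E)
  rw [measureReal_sdiff hsub isClosed_closedBall.measurableSet measure_closedBall_lt_top.ne,
    Measure.addHaar_real_closedBall μ _ hR,
    Measure.addHaar_real_closedBall μ _ (mul_nonneg (by linarith) hR), mul_pow]
  have := mul_le_mul_of_nonneg_right hbernoulli
    (show 0 ≤ R ^ finrank ℝ E * μ.real (ball (0 : E) 1) by positivity)
  linarith

lemma integrableOn_norm_sq_closedBall (R : ℝ) :
    IntegrableOn (fun z : E => ‖z‖ ^ 2) (closedBall 0 R) μ :=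
  ContinuousOn.integrableOn_compact (isCompact_closedBall _ _) (by fun_prop)

lemma integrableOn_sq_sub_norm_sq_closedBall (R : ℝ) :
    IntegrableOn (fun z : E => R ^ 2 - ‖z‖ ^ 2) (closedBall 0 R) μ :=
  (integrableOn_const measure_closedBall_lt_top.ne).sub (integrableOn_norm_sq_closedBall μ R)

lemma measureReal_sub_le_measureReal_inter_closedBall {F : Set E} {R δ : ℝ} (hR : 0 ≤ R)
    (hFR : F ⊆ closedBall 0 R) (hδ : 0 ≤ δ) (hδ1 : δ ≤ 1) :
    μ.real F - finrank ℝ E * δ * μ.real (closedBall (0 : E) R) ≤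
      μ.real (F ∩ closedBall 0 ((1 - δ) * R)) := by
  have hB : μ (closedBall (0 : E) R) ≠ ⊤ := measure_closedBall_lt_top.ne
  have hsplit := measureReal_inter_add_sdiff (μ := μ) (s := F)
    (isClosed_closedBall (x := (0 : E)) (ε := (1 - δ) * R)).measurableSet
    (measure_ne_top_of_subset hFR hB)
  have hdiff : μ.real (F \ closedBall 0 ((1 - δ) * R)) ≤
      μ.real (closedBall (0 : E) R \ closedBall 0 ((1 - δ) * R)) :=
    measureReal_mono (Set.sdiff_subset_sdiff_left hFR)
      (measure_ne_top_of_subset Set.sdiff_subset hB)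
  linarith [measureReal_closedBall_diff_le μ hR hδ hδ1]

lemma mul_sub_le_setIntegral_sq_sub_norm_sq {F : Set E} (hF : MeasurableSet F) {R δ : ℝ}
    (hR : 0 ≤ R) (hFR : F ⊆ closedBall 0 R) (hδ : 0 ≤ δ) (hδ1 : δ ≤ 1) :
    δ * R ^ 2 * (μ.real F - finrank ℝ E * δ * μ.real (closedBall (0 : E) R)) ≤
      ∫ z in F, (R ^ 2 - ‖z‖ ^ 2) ∂μ := by
  set B' := closedBall (0 : E) ((1 - δ) * R)
  have hF_fin : μ F ≠ ⊤ := measure_ne_top_of_subset hFR measure_closedBall_lt_top.ne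
  have hint : IntegrableOn (fun z : E => R ^ 2 - ‖z‖ ^ 2) F μ :=
    (integrableOn_sq_sub_norm_sq_closedBall μ R).mono_set hFR
  have hlower : ∀ z ∈ F ∩ B', δ * R ^ 2 ≤ R ^ 2 - ‖z‖ ^ 2 := fun z hz => by
    have hz' : ‖z‖ ^ 2 ≤ ((1 - δ) * R) ^ 2 := by
      gcongr
      exact mem_closedBall_zero_iff.mp hz.2
    nlinarith [mul_nonneg (mul_nonneg hδ (sub_nonneg.mpr hδ1)) (sq_nonneg R)]
  calc δ * R ^ 2 * (μ.real F - finrank ℝ E * δ * μ.real (closedBall (0 : E) R))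
      ≤ δ * R ^ 2 * μ.real (F ∩ B') := by
        gcongr
        exact measureReal_sub_le_measureReal_inter_closedBall μ hR hFR hδ hδ1
    _ ≤ ∫ z in F ∩ B', (R ^ 2 - ‖z‖ ^ 2) ∂μ :=
        setIntegral_ge_of_const_le_real (hF.inter isClosed_closedBall.measurableSet)
          (measure_ne_top_of_subset Set.inter_subset_left hF_fin) hlower
          (hint.mono_set Set.inter_subset_left)
    _ ≤ ∫ z in F, (R ^ 2 - ‖z‖ ^ 2) ∂μ :=
        setIntegral_mono_set hint
          ((ae_restrict_mem hF).mono fun _ hz => sq_sub_norm_sq_nonneg (hFR hz))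
          Set.inter_subset_left.eventuallyLE

lemma measureReal_sq_mul_sq_le_setIntegral [Nontrivial E] {F : Set E} (hF : MeasurableSet F)
    {R : ℝ} (hR : 0 ≤ R) (hFR : F ⊆ closedBall 0 R) :
    μ.real F ^ 2 * R ^ 2 ≤
      4 * finrank ℝ E * μ.real (closedBall (0 : E) R) * ∫ z in F, (R ^ 2 - ‖z‖ ^ 2) ∂μ := by
  set B := closedBall (0 : E) R
  rcases (measureReal_nonneg (μ := μ) (s := F)).eq_or_lt with hm | hm
  · rw [← hm, zero_pow two_ne_zero, zero_mul]
    exact mul_nonneg (by positivity)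
      (setIntegral_nonneg hF fun _ hz => sq_sub_norm_sq_nonneg (hFR hz))
  have hmB : μ.real F ≤ μ.real B := measureReal_mono hFR measure_closedBall_lt_top.ne
  have hB0 : 0 < μ.real B := hm.trans_le hmB
  have hk : (1 : ℝ) ≤ finrank ℝ E := Nat.one_le_cast.mpr finrank_pos
  -- With this `δ` the shell of relative width `δ` contains at most half of `F`.
  set δ := μ.real F / (2 * finrank ℝ E * μ.real B) with hδ
  have hδ1 : δ ≤ 1 := by
    rw [hδ, div_le_one (by positivity)]
    nlinarith
  calc μ.real F ^ 2 * R ^ 2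
      = 4 * finrank ℝ E * μ.real B *
          (δ * R ^ 2 * (μ.real F - finrank ℝ E * δ * μ.real B)) := by
        rw [hδ]
        field_simp
        ring
    _ ≤ 4 * finrank ℝ E * μ.real B * ∫ z in F, (R ^ 2 - ‖z‖ ^ 2) ∂μ := by
        refine mul_le_mul_of_nonneg_left ?_ (by positivity)
        exact mul_sub_le_setIntegral_sq_sub_norm_sq μ hF hR hFR (by positivity) hδ1

lemma setIntegral_diff_le_secondMoment_sub {S : Set E} (hS : MeasurableSet S) {R : ℝ}
    (hR : 0 ≤ R) (hvol : μ S = μ (closedBall 0 R))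
    (hint : IntegrableOn (fun z : E => ‖z‖ ^ 2) S μ) :
    ∫ z in closedBall 0 R \ S, (R ^ 2 - ‖z‖ ^ 2) ∂μ ≤
      (∫ z in S, ‖z‖ ^ 2 ∂μ) - ∫ z in closedBall 0 R, ‖z‖ ^ 2 ∂μ := by
  set B := closedBall (0 : E) R
  have hBm : MeasurableSet B := isClosed_closedBall.measurableSet
  have hB : μ B ≠ ⊤ := measure_closedBall_lt_top.ne
  have hS_fin : μ S ≠ ⊤ := hvol ▸ hB
  have hint_sub : IntegrableOn (fun z : E => R ^ 2 - ‖z‖ ^ 2) S μ :=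
    (integrableOn_const hS_fin).sub hint
  have hS_eq : ∫ z in S, (R ^ 2 - ‖z‖ ^ 2) ∂μ = μ.real B * R ^ 2 - ∫ z in S, ‖z‖ ^ 2 ∂μ := by
    rw [integral_sub (f := fun _ => R ^ 2) (integrableOn_const hS_fin) hint, setIntegral_const,
      measureReal_def, hvol, smul_eq_mul, measureReal_def]
  have hB_eq : ∫ z in B, (R ^ 2 - ‖z‖ ^ 2) ∂μ = μ.real B * R ^ 2 - ∫ z in B, ‖z‖ ^ 2 ∂μ := by
    rw [integral_sub (f := fun _ => R ^ 2) (integrableOn_const hB)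
      (integrableOn_norm_sq_closedBall μ R), setIntegral_const, smul_eq_mul]
  have hS_split := integral_inter_add_sdiff hBm hint_sub
  have hB_split := integral_inter_add_sdiff hS (integrableOn_sq_sub_norm_sq_closedBall μ R)
  have hout : ∫ z in S \ B, (R ^ 2 - ‖z‖ ^ 2) ∂μ ≤ 0 :=
    setIntegral_nonpos (hS.diff hBm) fun z hz => by
      have : R ≤ ‖z‖ := (not_le.mp fun h => hz.2 (mem_closedBall_zero_iff.mpr h)).le
      rw [sub_nonpos]
      gcongr
  rw [Set.inter_comm] at hB_split
  linarith

theorem measureReal_symmDiff_closedBall_sq_le [Nontrivial E] {S : Set E} (hS : MeasurableSet S)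
    {R : ℝ} (hR : 0 ≤ R) (hvol : μ S = μ (closedBall 0 R))
    (hint : IntegrableOn (fun z : E => ‖z‖ ^ 2) S μ) :
    μ.real (S ∆ closedBall 0 R) ^ 2 * R ^ 2 ≤
      16 * finrank ℝ E * μ.real (closedBall (0 : E) R) *
        ((∫ z in S, ‖z‖ ^ 2 ∂μ) - ∫ z in closedBall 0 R, ‖z‖ ^ 2 ∂μ) := by
  set B := closedBall (0 : E) R
  have hBm : MeasurableSet B := isClosed_closedBall.measurableSet
  have hB : μ B ≠ ⊤ := measure_closedBall_lt_top.ne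
  have hS_fin : μ S ≠ ⊤ := hvol ▸ hB
  have hsymm : μ.real (S ∆ B) = 2 * μ.real (B \ S) := by
    have hS_split := measureReal_inter_add_sdiff (μ := μ) (s := S) hBm hS_fin
    have hB_split := measureReal_inter_add_sdiff (μ := μ) (s := B) hS hB
    have hreal : μ.real S = μ.real B := by rw [measureReal_def, hvol, measureReal_def]
    rw [Set.inter_comm] at hB_split
    rw [measureReal_symmDiff_eq hS hBm hS_fin hB]
    linarith
  calc μ.real (S ∆ B) ^ 2 * R ^ 2 = 4 * (μ.real (B \ S) ^ 2 * R ^ 2) := by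
        rw [hsymm]
        ring
    _ ≤ 4 * (4 * finrank ℝ E * μ.real B * ∫ z in B \ S, (R ^ 2 - ‖z‖ ^ 2) ∂μ) := by
        refine mul_le_mul_of_nonneg_left ?_ (by norm_num)
        exact measureReal_sq_mul_sq_le_setIntegral μ (hBm.diff hS) hR Set.sdiff_subset
    _ = 16 * finrank ℝ E * μ.real B * ∫ z in B \ S, (R ^ 2 - ‖z‖ ^ 2) ∂μ := by ring
    _ ≤ _ := by
        gcongr
        exact setIntegral_diff_le_secondMoment_sub μ hS hR hvol hint

end SecondMoment

/-! ## The quantitative shape theorem -/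

section ShapeTheorem

open Metric

variable {d : ℕ}

lemma volume_real_closedBall_ballRadius (hd : 1 ≤ d) {t : ℝ} (ht : 0 ≤ t) :
    volume.real (closedBall (0 : EuclideanSpace ℝ (Fin d)) (ballRadius d t)) = t := by
  rw [Measure.addHaar_real_closedBall _ _ (ballRadius_nonneg d ht), finrank_euclideanSpace_fin,
    ballRadius_pow hd ht]
  exact div_mul_cancel₀ t (ballVol_pos d).ne'

lemma volume_real_cellUnion (A : Finset (Site d)) : volume.real (cellUnion A) = A.card := by
  rw [measureReal_def, volume_cellUnion, ENNReal.toReal_natCast]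

lemma volume_cellUnion_ne_top (A : Finset (Site d)) : volume (cellUnion A) ≠ ⊤ := by
  rw [volume_cellUnion]
  exact ENNReal.natCast_ne_top _

lemma volume_cellUnion_eq_closedBall (hd : 1 ≤ d) (A : Finset (Site d)) :
    volume (cellUnion A) = volume (closedBall (0 : EuclideanSpace ℝ (Fin d))
      (ballRadius d A.card)) := by
  refine (ENNReal.toReal_eq_toReal_iff' (volume_cellUnion_ne_top A)
    measure_closedBall_lt_top.ne).mp ?_
  exact (volume_real_cellUnion A).trans
    (volume_real_closedBall_ballRadius hd A.card.cast_nonneg).symm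

/-- The volume of the symmetric difference between `A^□` and the centred ball of the same volume,
which is the left-hand side of the theorem before rescaling. -/
def ballDefect (A : Finset (Site d)) : ℝ :=
  volume.real (cellUnion A ∆ closedBall 0 (ballRadius d A.card))

lemma ballDefect_le (hd : 1 ≤ d) (A : Finset (Site d)) : ballDefect A ≤ 2 * A.card := by
  have hball := volume_real_closedBall_ballRadius hd (A.card.cast_nonneg (α := ℝ))
  calc ballDefect A ≤ volume.real (cellUnion A ∪ closedBall 0 (ballRadius d A.card)) :=
        measureReal_mono symmDiff_le_sup
          (measure_union_ne_top (volume_cellUnion_ne_top A) measure_closedBall_lt_top.ne)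
    _ ≤ volume.real (cellUnion A) + volume.real (closedBall 0 (ballRadius d A.card)) :=
        measureReal_union_le _ _
    _ = 2 * A.card := by
        rw [hball, volume_real_cellUnion]
        ring

lemma unitVolBall_eq_smul_closedBall (d : ℕ) {t : ℝ} (ht : 0 < t) :
    unitVolBall d = t ^ (-(1 : ℝ) / (d : ℝ)) • closedBall 0 (ballRadius d t) := by
  have hscale : 0 < t ^ (-(1 : ℝ) / (d : ℝ)) := by positivity
  rw [_root_.smul_closedBall' hscale.ne', smul_zero, Real.norm_of_nonneg hscale.le, unitVolBall,
    ballRadius, Real.div_rpow ht.le (ballVol_pos d).le, neg_div, Real.rpow_neg (ballVol_pos d).le,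
    Real.rpow_neg ht.le, inv_mul_eq_div, div_div_cancel_left' (by positivity)]

lemma volume_smul_box_symmDiff_unitVolBall (hd : 1 ≤ d) {A : Finset (Site d)} (hA : A.Nonempty) :
    (volume (((A.card : ℝ) ^ (-(1 : ℝ) / (d : ℝ)) • box d A) ∆ unitVolBall d)).toReal =
      ballDefect A / A.card := by
  have hn : (0 : ℝ) < A.card := Nat.cast_pos.mpr hA.card_pos
  set c := (A.card : ℝ) ^ (-(1 : ℝ) / (d : ℝ)) with hc
  have hc0 : 0 < c := by positivity
  have hcd : c ^ d = (A.card : ℝ)⁻¹ := by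
    rw [hc, ← Real.rpow_mul_natCast hn.le, div_mul_cancel₀ _ (by positivity), Real.rpow_neg_one]
  have hsymm : (box d A ∆ closedBall 0 (ballRadius d A.card) : Set (EuclideanSpace ℝ (Fin d)))
      =ᵐ[volume] (cellUnion A ∆ closedBall 0 (ballRadius d A.card) : Set _) :=
    (box_ae_eq_cellUnion A).symmDiff (ae_eq_refl _)
  rw [unitVolBall_eq_smul_closedBall d hn, ← Set.smul_set_symmDiff₀ hc0.ne', Measure.addHaar_smul,
    measure_congr hsymm, finrank_euclideanSpace_fin,
    ENNReal.toReal_mul, ENNReal.toReal_ofReal (abs_nonneg _), abs_of_pos (pow_pos hc0 d), hcd,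
    inv_mul_eq_div]
  rfl

/-- The gap, up to discretization, between the second moments of `A^□` and of the centred ball of
the same volume. -/
def momentGap (A : Finset (Site d)) : ℝ :=
  ∑ x ∈ A, nsq x + ∑ x ∈ A, l1Norm x + A.card * ((d : ℝ) / 4) -
    d / (d + 2) * (A.card * ballRadius d A.card ^ 2)

lemma ballDefect_sq_le (hd : 1 ≤ d) (A : Finset (Site d)) :
    ballDefect A ^ 2 * ballRadius d A.card ^ 2 ≤ 16 * d * A.card * momentGap A := by
  have : Nonempty (Fin d) := ⟨⟨0, hd⟩⟩
  have hR := ballRadius_nonneg d (A.card.cast_nonneg (α := ℝ))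
  have hball := volume_real_closedBall_ballRadius hd (A.card.cast_nonneg (α := ℝ))
  have hmoment := setIntegral_norm_sq_closedBall (volume (α := EuclideanSpace ℝ (Fin d))) hR
  have hstab := measureReal_symmDiff_closedBall_sq_le volume (measurableSet_cellUnion A) hR
    (volume_cellUnion_eq_closedBall hd A) (integrableOn_norm_sq_cellUnion A)
  rw [finrank_euclideanSpace_fin, hball] at hmoment hstab
  rw [hmoment] at hstab
  refine hstab.trans ?_
  rw [momentGap]
  gcongr
  exact setIntegral_norm_sq_cellUnion_le A

lemma two_mul_mul_sum_l1Norm_le (A : Finset (Site d)) (s : ℝ) :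
    2 * s * ∑ x ∈ A, l1Norm x ≤ ∑ x ∈ A, nsq x + d * (A.card * s ^ 2) := by
  have hsite (x : Site d) : 2 * s * l1Norm x ≤ nsq x + d * s ^ 2 := by
    have hconst : d * s ^ 2 = ∑ _i : Fin d, s ^ 2 := by simp
    rw [l1Norm, nsq, hconst, Finset.mul_sum, ← Finset.sum_add_distrib]
    refine Finset.sum_le_sum fun i _ => ?_
    have := two_mul_le_add_sq s |(x i : ℝ)|
    rw [sq_abs] at this
    linarith
  rw [Finset.mul_sum]
  refine (Finset.sum_le_sum fun x _ => hsite x).trans_eq ?_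
  rw [Finset.sum_add_distrib, Finset.sum_const, nsmul_eq_mul]
  ring

lemma rpow_one_div_le (hd : 1 ≤ d) {n : ℕ} (hn : 1 ≤ n) : (n : ℝ) ^ (1 / (d : ℝ)) ≤ n := by
  refine (Real.rpow_le_rpow_of_exponent_le (Nat.one_le_cast.mpr hn) ?_).trans_eq (Real.rpow_one _)
  rw [div_le_one (by positivity)]
  exact Nat.one_le_cast.mpr hd

lemma exists_sum_nsq_le (hd : 1 ≤ d) : ∃ K : ℝ, 0 ≤ K ∧
    ∀ {D : ℝ} {r : Site d → ℕ → Dir d} {A : Finset (Site d)} {c : Site d → ℕ},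
      IsOdometer r A c → HasDiscrepancy d D r → A.Nonempty →
      ∑ x ∈ A, nsq x ≤ √(PhiSum d A.card) ^ 2 + d / (d + 2) * (A.card * ballRadius d A.card ^ 2) +
        K * (D * (A.card * (A.card : ℝ) ^ (1 / (d : ℝ)))) + 4 * D * ∑ x ∈ A, l1Norm x := by
  set β := ballRadius d 1
  have hβ : 0 < β := ballRadius_one_pos d
  refine ⟨2 * (β ^ 2 + 2 * β + 1) + 48 * d ^ 2 + 2 * d, by positivity,
    fun {D r A c} hc hr hA => ?_⟩
  have hD := hr.half_le hd
  have hcard : 1 ≤ A.card := hA.card_pos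
  have hR := ballRadius_eq_mul_rpow d (A.card.cast_nonneg (α := ℝ))
  have hs := one_le_rpow_one_div d hcard
  have hsn := rpow_one_div_le hd hcard
  have hmain := hc.sum_nsq_le_phiSum hd hr
  have hballs := sum_ballRadius_add_one_sq_le hd hcard
  have hphi : PhiSum d A.card ≤ √(PhiSum d A.card) ^ 2 := by
    rw [Real.sq_sqrt']
    exact le_max_left _ _
  set n := (A.card : ℝ)
  set s := n ^ (1 / (d : ℝ))
  have : 0 ≤ n := A.card.cast_nonneg
  have herror : ballRadius d n ^ 2 + n * (2 * ballRadius d n + 1) ≤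
      2 * (β ^ 2 + 2 * β + 1) * (D * (n * s)) := by
    calc ballRadius d n ^ 2 + n * (2 * ballRadius d n + 1)
        = β ^ 2 * (s * s) + 2 * β * (n * s) + n * 1 := by
          rw [hR]
          ring
      _ ≤ β ^ 2 * (n * s) + 2 * β * (n * s) + n * s := by gcongr
      _ = (β ^ 2 + 2 * β + 1) * (1 * (n * s)) := by ring
      _ ≤ (β ^ 2 + 2 * β + 1) * (2 * D * (n * s)) := by
          gcongr
          linarith
      _ = _ := by ring
  have hlinear : D * (2 * d * (n * 1)) ≤ D * (2 * d * (n * s)) := by gcongr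
  linarith

/-- An error term `L` in a bound for `ψ` that is itself controlled by a small multiple of `ψ` can be
moved to the left-hand side. -/
lemma le_of_le_add_of_le_mul {ψ U I L θ Y : ℝ} (hψ : ψ ≤ U + I + L) (hL : L ≤ 2 * θ * (ψ + Y))
    (hθ : 0 ≤ θ) (hθ4 : θ ≤ 1 / 4) (hψ0 : 0 ≤ ψ) (hU : 0 ≤ U) (hY : 0 ≤ Y) :
    L ≤ U + 4 * θ * I + 4 * θ * Y := by
  have hθψ : θ * ψ ≤ 1 / 4 * ψ := by gcongr
  have hψ' : ψ ≤ 2 * U + 2 * I + 4 * θ * Y := by linarith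
  have hθψ' : θ * ψ ≤ θ * (2 * U + 2 * I + 4 * θ * Y) := by gcongr
  have hθU : θ * U ≤ 1 / 4 * U := by gcongr
  have hθY : θ * (θ * Y) ≤ 1 / 4 * (θ * Y) := by gcongr
  linarith

lemma exists_mul_sum_l1Norm_le (hd : 1 ≤ d) : ∃ K : ℝ, 0 ≤ K ∧
    ∀ {D : ℝ} {r : Site d → ℕ → Dir d} {A : Finset (Site d)} {c : Site d → ℕ},
      IsOdometer r A c → HasDiscrepancy d D r → A.Nonempty →
      4 * D ≤ (A.card : ℝ) ^ (1 / (d : ℝ)) →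
      4 * D * ∑ x ∈ A, l1Norm x ≤ √(PhiSum d A.card) ^ 2 +
        K * (D * (A.card * (A.card : ℝ) ^ (1 / (d : ℝ)))) := by
  obtain ⟨K, hK, hbound⟩ := exists_sum_nsq_le hd
  set β := ballRadius d 1
  refine ⟨K + 4 * β ^ 2 + 4 * d, by positivity, fun {D r A c} hc hr hA hDs => ?_⟩
  have hD := hr.half_le hd
  have hs := one_le_rpow_one_div d hA.card_pos
  have hR := ballRadius_eq_mul_rpow d (A.card.cast_nonneg (α := ℝ))
  have hnsq := hbound hc hr hA
  have hl1 := two_mul_mul_sum_l1Norm_le A ((A.card : ℝ) ^ (1 / (d : ℝ)))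
  set n := (A.card : ℝ)
  set s := n ^ (1 / (d : ℝ))
  have : 0 ≤ n := A.card.cast_nonneg
  have hθ : D / s ≤ 1 / 4 := by
    rw [div_le_iff₀ (by positivity)]
    linarith
  have hmoment : D / s * (d / (d + 2) * (n * ballRadius d n ^ 2)) ≤ β ^ 2 * (D * (n * s)) := by
    calc D / s * (d / (d + 2) * (n * ballRadius d n ^ 2)) ≤ D / s * (1 * (n * (β * s) ^ 2)) := by
          rw [← hR]
          have hfrac : (d : ℝ) / (d + 2) ≤ 1 := (div_le_one (by positivity)).mpr (by linarith)
          gcongr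
      _ = β ^ 2 * (D * (n * s)) := by field_simp
  have hconst : D / s * (d * (n * s ^ 2)) = d * (D * (n * s)) := by field_simp
  have hle : 4 * D * ∑ x ∈ A, l1Norm x ≤ 2 * (D / s) * (∑ x ∈ A, nsq x + d * (n * s ^ 2)) := by
    calc 4 * D * ∑ x ∈ A, l1Norm x = 2 * (D / s) * (2 * s * ∑ x ∈ A, l1Norm x) := by
          field_simp
          ring
      _ ≤ _ := by gcongr
  have habsorb := le_of_le_add_of_le_mul
    (U := √(PhiSum d A.card) ^ 2 + K * (D * (n * s)))
    (I := d / (d + 2) * (n * ballRadius d n ^ 2)) (by linarith) hle (by positivity) hθ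
    (Finset.sum_nonneg fun x _ => nsq_nonneg x) (by positivity) (by positivity)
  linarith

lemma exists_momentGap_le (hd : 1 ≤ d) : ∃ K : ℝ, 0 ≤ K ∧
    ∀ {D : ℝ} {r : Site d → ℕ → Dir d} {A : Finset (Site d)} {c : Site d → ℕ},
      IsOdometer r A c → HasDiscrepancy d D r → A.Nonempty →
      4 * D ≤ (A.card : ℝ) ^ (1 / (d : ℝ)) →
      momentGap A ≤ K * (√(PhiSum d A.card) ^ 2 +
        D * (A.card * (A.card : ℝ) ^ (1 / (d : ℝ)))) := by
  obtain ⟨K₁, hK₁, hnsq⟩ := exists_sum_nsq_le hd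
  obtain ⟨K₂, hK₂, hl1⟩ := exists_mul_sum_l1Norm_le hd
  refine ⟨5 / 2 + K₁ + 3 / 2 * K₂ + d / 2, by positivity, fun {D r A c} hc hr hA hDs => ?_⟩
  have hD := hr.half_le hd
  have hs := one_le_rpow_one_div d hA.card_pos
  specialize hnsq hc hr hA
  specialize hl1 hc hr hA hDs
  have hl1_nonneg : 0 ≤ ∑ x ∈ A, l1Norm x :=
    Finset.sum_nonneg fun x _ => Finset.sum_nonneg fun i _ => abs_nonneg _
  rw [momentGap]
  set n := (A.card : ℝ)
  set s := n ^ (1 / (d : ℝ))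
  set P := ∑ x ∈ A, l1Norm x
  set F := √(PhiSum d A.card) ^ 2
  set X := D * (n * s)
  have hn : 0 ≤ n := A.card.cast_nonneg
  have hP : 1 * P ≤ 2 * D * P := by gcongr; linarith
  have hnX : n ≤ 2 * X := by
    calc n = 1 * (n * 1) := by ring
      _ ≤ 2 * D * (n * s) := by gcongr; linarith
      _ = 2 * X := by ring
  have hnd : d / 4 * n ≤ d / 4 * (2 * X) := by gcongr
  have hF : 0 ≤ (K₁ + 3 / 2 * K₂ + d / 2) * F := by positivity
  have : 0 ≤ X := by positivity
  linarith

lemma rpow_neg_half_sub_mul_rpow_half {n : ℝ} (hn : 0 < n) (a Φ : ℝ) :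
    n ^ (-(1 : ℝ) / 2 - a) * Φ ^ ((1 : ℝ) / 2) = √Φ / (√n * n ^ a) := by
  rw [← Real.sqrt_eq_rpow, Real.rpow_sub hn, neg_div, Real.rpow_neg hn.le, ← Real.sqrt_eq_rpow]
  field_simp

lemma rpow_half_mul_rpow_neg {n : ℝ} (hn : 0 < n) (d : ℕ) (D : ℝ) :
    D ^ ((1 : ℝ) / 2) * n ^ (-(1 : ℝ) / (2 * (d : ℝ))) = √D / √(n ^ (1 / (d : ℝ))) := by
  rw [← Real.sqrt_eq_rpow, Real.sqrt_eq_rpow (n ^ _), ← Real.rpow_mul hn.le, div_eq_mul_inv √D,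
    ← Real.rpow_neg hn.le]
  congr 2
  ring

lemma exists_ballDefect_div_sq_le (hd : 1 ≤ d) : ∃ Q : ℝ, 0 ≤ Q ∧
    ∀ {D : ℝ} {r : Site d → ℕ → Dir d} {A : Finset (Site d)} {c : Site d → ℕ},
      IsOdometer r A c → HasDiscrepancy d D r → A.Nonempty →
      4 * D ≤ (A.card : ℝ) ^ (1 / (d : ℝ)) →
      (ballDefect A / A.card) ^ 2 ≤
        Q * ((√(PhiSum d A.card) / (√A.card * (A.card : ℝ) ^ (1 / (d : ℝ)))) ^ 2 +
          (√D / √((A.card : ℝ) ^ (1 / (d : ℝ)))) ^ 2) := by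
  obtain ⟨K, hK, hgap⟩ := exists_momentGap_le hd
  have hβ := ballRadius_one_pos d
  refine ⟨16 * d * K / ballRadius d 1 ^ 2, by positivity, fun {D r A c} hc hr hA hDs => ?_⟩
  have hD : 0 ≤ D := by linarith [hr.half_le hd]
  have hR := ballRadius_eq_mul_rpow d (A.card.cast_nonneg (α := ℝ))
  have hdefect := ballDefect_sq_le hd A
  have hgap := hgap hc hr hA hDs
  have hn : (0 : ℝ) < A.card := Nat.cast_pos.mpr hA.card_pos
  rw [hR] at hdefect
  rw [div_pow √D, Real.sq_sqrt hD, Real.sq_sqrt (by positivity), div_pow √_, mul_pow,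
    Real.sq_sqrt hn.le, div_pow, div_le_iff₀ (by positivity)]
  set n := (A.card : ℝ)
  set s := n ^ (1 / (d : ℝ))
  have hs : 0 < s := Real.rpow_pos_of_pos hn _
  rw [← mul_le_mul_iff_of_pos_right (show 0 < (ballRadius d 1 * s) ^ 2 by positivity)]
  calc ballDefect A ^ 2 * (ballRadius d 1 * s) ^ 2
      ≤ 16 * d * n * (K * (√(PhiSum d A.card) ^ 2 + D * (n * s))) := hdefect.trans (by gcongr)
    _ = _ := by field_simp

lemma exists_ballDefect_div_le (hd : 1 ≤ d) : ∃ C : ℝ, 0 ≤ C ∧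
    ∀ {D : ℝ} {r : Site d → ℕ → Dir d} {A : Finset (Site d)} {c : Site d → ℕ},
      IsOdometer r A c → HasDiscrepancy d D r → A.Nonempty →
      ballDefect A / A.card ≤
        C * (√(PhiSum d A.card) / (√A.card * (A.card : ℝ) ^ (1 / (d : ℝ))) +
          √D / √((A.card : ℝ) ^ (1 / (d : ℝ)))) := by
  obtain ⟨Q, hQ, hsq⟩ := exists_ballDefect_div_sq_le hd
  refine ⟨4 + √Q, by positivity, fun {D r A c} hc hr hA => ?_⟩
  have hsq := hsq hc hr hA
  have hle : ballDefect A / A.card ≤ 2 :=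
    div_le_of_le_mul₀ A.card.cast_nonneg zero_le_two (ballDefect_le hd A)
  have hs : (0 : ℝ) < (A.card : ℝ) ^ (1 / (d : ℝ)) :=
    zero_lt_one.trans_le (one_le_rpow_one_div d hA.card_pos)
  have ha : 0 ≤ √(PhiSum d A.card) / (√A.card * (A.card : ℝ) ^ (1 / (d : ℝ))) := by positivity
  have hb : 0 ≤ √D / √((A.card : ℝ) ^ (1 / (d : ℝ))) := by positivity
  have hb_lower (hDs : (A.card : ℝ) ^ (1 / (d : ℝ)) ≤ 4 * D) :
      1 / 2 ≤ √D / √((A.card : ℝ) ^ (1 / (d : ℝ))) := by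
    rw [← Real.sqrt_div' D hs.le]
    refine Real.le_sqrt_of_sq_le ?_
    rw [le_div_iff₀ hs]
    linarith
  generalize √(PhiSum d A.card) / (√A.card * (A.card : ℝ) ^ (1 / (d : ℝ))) = a at *
  generalize √D / √((A.card : ℝ) ^ (1 / (d : ℝ))) = b at *
  have hQab : 0 ≤ √Q * (a + b) := by positivity
  rcases le_total ((A.card : ℝ) ^ (1 / (d : ℝ))) (4 * D) with hDs | hDs
  · linarith [hb_lower hDs]
  · have hroot : ballDefect A / A.card ≤ √Q * (a + b) := by
      refine le_of_sq_le_sq ?_ hQab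
      rw [mul_pow, Real.sq_sqrt hQ]
      refine (hsq hDs).trans (mul_le_mul_of_nonneg_left ?_ hQ)
      linarith [mul_nonneg ha hb, add_sq a b]
    linarith

lemma rpow_half_le_rpow_one_sub (hd : 1 ≤ d) {D : ℝ} (hD : 1 ≤ D) :
    D ^ ((1 : ℝ) / 2) ≤ D ^ (1 - 1 / (8 * (d : ℝ))) := by
  have hd' : (1 : ℝ) ≤ d := Nat.one_le_cast.mpr hd
  refine Real.rpow_le_rpow_of_exponent_le hD ?_
  have : 1 / (8 * (d : ℝ)) ≤ 1 / 2 := by gcongr; linarith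
  linarith

end ShapeTheorem

theorem main_theorem_general (d : ℕ) (hd : 1 ≤ d) :
    ∃ C : ℝ, 0 ≤ C ∧ ∀ (D : ℝ) (r : Site d → ℕ → Dir d), HasDiscrepancy d D r →
      ∀ n : ℕ, 1 ≤ n →
        (volume (((n : ℝ) ^ (-(1 : ℝ) / (d : ℝ)) • box d (aggRegion r n)) ∆ unitVolBall d)).toReal
          ≤ C * ((n : ℝ) ^ (-(1 : ℝ) / 2 - 1 / (d : ℝ)) * PhiSum d n ^ ((1 : ℝ) / 2)
              + D ^ ((1 : ℝ) / 2) * (n : ℝ) ^ (-(1 : ℝ) / (2 * (d : ℝ)))) := by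
  obtain ⟨C, hC, hbound⟩ := exists_ballDefect_div_le hd
  refine ⟨C, hC, fun D r hr n hn => ?_⟩
  obtain ⟨A, c, hagg, rfl, hc⟩ := hr.exists_isOdometer_aggRegion hd hn
  have hA : A.Nonempty := Finset.card_pos.mp hn
  have hn : (0 : ℝ) < A.card := Nat.cast_pos.mpr hn
  rw [hagg, volume_smul_box_symmDiff_unitVolBall hd hA, rpow_neg_half_sub_mul_rpow_half hn,
    rpow_half_mul_rpow_neg hn]
  exact hbound hc hr hA

theorem main_theorem (d : ℕ) (hd : 1 ≤ d) :
    ∃ C : ℝ, ∀ (D : ℝ), 1 ≤ D → ∀ r : Site d → ℕ → Dir d, HasDiscrepancy d D r →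
      ∀ n : ℕ, 1 ≤ n →
        (volume (((n : ℝ) ^ (-(1 : ℝ) / (d : ℝ)) • box d (aggRegion r n)) ∆ unitVolBall d)).toReal
          ≤ C * ((n : ℝ) ^ (-(1 : ℝ) / 2 - 1 / (d : ℝ)) * PhiSum d n ^ ((1 : ℝ) / 2)
              + D ^ (1 - 1 / (8 * (d : ℝ))) * (n : ℝ) ^ (-(1 : ℝ) / (2 * (d : ℝ)))) := by
  obtain ⟨C, hC, hbound⟩ := main_theorem_general d hd
  refine ⟨C, fun D hD r hr n hn => (hbound D r hr n hn).trans ?_⟩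
  gcongr C * (_ + ?_ * _)
  exact rpow_half_le_rpow_one_sub hd hD

end RotorRouterPaper
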